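/- arXiv:1308.2170 — 2 statements merged into one kernel-verified Lean document; each statement's English description precedes it below -/
import Mathlib

section
/- Let e ≥ 2, r ≥ 2, and let M ∈ M(r,e) be such that the weight graph G(M) is a tree. Then there exist y′ = (y′_1,…,y′_{r−1}) ∈ ℕ^{r−1} with y′_1 ≥ 1 and y′_{r−1} ≥ 1, an integer 1 ≤ t′ ≤ r−1 and (i′,j′) ∈ P_{t′}(y′) such that M is row equivalent to a matrix in T^{y′}(i′,j′). -/
open scoped Classical

namespace AK
noncomputable section



/-! ### Matrices, order from base tuple, abacus β-sets -/

/-- The order ≺ on columns determined by a base tuple `B`. -/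
def prec {e : ℕ} (B : Fin e → ℕ) (i j : Fin e) : Prop :=
  B i < B j ∨ (B i = B j ∧ i < j)

/-- `rank B i = π(B)⁻¹(i)`, the number of columns ≺-smaller than `i`. -/
def rank {e : ℕ} (B : Fin e → ℕ) (i : Fin e) : Fin e :=
  ⟨(Finset.univ.filter (fun j => prec B j i)).card, by
    have h1 : (Finset.univ.filter (fun j => prec B j i)) ⊆ Finset.univ.erase i := by
      intro j hj
      rw [Finset.mem_filter] at hj
      refine Finset.mem_erase.mpr ⟨?_, Finset.mem_univ j⟩
      rintro rfl
      rcases hj.2 with h | ⟨-, h⟩ <;> exact lt_irrefl _ h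
    have h2 := Finset.card_le_card h1
    have h3 : (Finset.univ.erase i).card < Finset.univ.card :=
      Finset.card_erase_lt_of_mem (Finset.mem_univ i)
    simpa using lt_of_le_of_lt h2 h3⟩

/-- The number of beads on runner `i` of the abacus of component `s` of `Pt(B,M)`. -/
def beads {e r : ℕ} (B : Fin e → ℕ) (M : Fin r → Fin e → Bool) (s : Fin r) (i : Fin e) : ℕ :=
  B i + (if M s (rank B i) then 1 else 0)

/-- The canonical β-set of component `s` of `Pt(B,M)`. -/
def Tset {e r : ℕ} (B : Fin e → ℕ) (M : Fin r → Fin e → Bool) (s : Fin r) : Set ℤ :=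
  {z | z < 0 ∨ (0 ≤ z ∧ ∃ h : z.toNat % e < e, z.toNat / e < beads B M s ⟨z.toNat % e, h⟩)}

/-- `n_s`, the total number of beads of component `s`. -/
def nsum {e r : ℕ} (B : Fin e → ℕ) (M : Fin r → Fin e → Bool) (s : Fin r) : ℕ :=
  ∑ i : Fin e, beads B M s i

/-- Decreasing enumeration of a set of integers: `tEnum T x` is `t_{x+1}`. -/
noncomputable def tEnum (T : Set ℤ) : ℕ → ℤ
  | 0 => sSup T
  | (x + 1) => sSup (T ∩ Set.Iio (tEnum T x))

/-- The multipartition `Pt(B,M)`: component `s`, part `p+1` (0-indexed parts). -/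
noncomputable def PtPart {e r : ℕ} (B : Fin e → ℕ) (M : Fin r → Fin e → Bool)
    (s : Fin r) (p : ℕ) : ℕ :=
  (tEnum (Tset B M s) p + (p + 1) - (nsum B M s : ℤ)).toNat

/-- The multicharge of `Pt(B,M)`. -/
noncomputable def PtCharge {e r : ℕ} (B : Fin e → ℕ) (M : Fin r → Fin e → Bool)
    (s : Fin r) : ZMod e :=
  (nsum B M s : ZMod e)

/-! ### Nodes, good nodes and Kleshchev multipartitions -/

/-- A node `(s, x, y)` (all 0-indexed). -/
abbrev Node (r : ℕ) := Fin r × ℕ × ℕ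

/-- `A` is above `B`. -/
def NodeAbove {r : ℕ} (A B : Node r) : Prop :=
  A.1 < B.1 ∨ (A.1 = B.1 ∧ A.2.1 < B.2.1)

/-- The residue of a node. -/
def res {e r : ℕ} (a : Fin r → ZMod e) (A : Node r) : ZMod e :=
  a A.1 - (A.2.1 : ZMod e) + (A.2.2 : ZMod e)

/-- `A` is a removable node of `lam`. -/
def Removable {r : ℕ} (lam : Fin r → ℕ → ℕ) (A : Node r) : Prop :=
  A.2.2 + 1 = lam A.1 A.2.1 ∧ lam A.1 (A.2.1 + 1) < lam A.1 A.2.1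

/-- `A` is an addable node of `lam`. -/
def Addable {r : ℕ} (lam : Fin r → ℕ → ℕ) (A : Node r) : Prop :=
  A.2.2 = lam A.1 A.2.1 ∧ (A.2.1 = 0 ∨ lam A.1 A.2.1 < lam A.1 (A.2.1 - 1))

/-- `A` is a normal node of `lam`. -/
def Normal {e r : ℕ} (a : Fin r → ZMod e) (lam : Fin r → ℕ → ℕ) (A : Node r) : Prop :=
  Removable lam A ∧
    ∀ B : Node r, Addable lam B → res a B = res a A → NodeAbove A B →
      Set.ncard {C : Node r | Addable lam C ∧ res a C = res a A ∧ NodeAbove A C ∧ NodeAbove C B}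
        < Set.ncard {C : Node r | Removable lam C ∧ res a C = res a A ∧ NodeAbove A C ∧ NodeAbove C B}

/-- `A` is a good node of `lam`: normal, and highest among normal nodes of its residue. -/
def Good {e r : ℕ} (a : Fin r → ZMod e) (lam : Fin r → ℕ → ℕ) (A : Node r) : Prop :=
  Normal a lam A ∧ ∀ B : Node r, Normal a lam B → res a B = res a A → B ≠ A → NodeAbove A B

/-- Remove the node `A` from `lam`. -/
def removeNode {r : ℕ} (lam : Fin r → ℕ → ℕ) (A : Node r) : Fin r → ℕ → ℕ :=
  fun s x => if s = A.1 ∧ x = A.2.1 then lam s x - 1 else lam s x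

/-- Kleshchev multipartitions (for the multicharge `a`). -/
inductive IsKleshchev {e r : ℕ} (a : Fin r → ZMod e) : (Fin r → ℕ → ℕ) → Prop
  | empty : IsKleshchev a (fun _ _ => 0)
  | step (lam : Fin r → ℕ → ℕ) (A : Node r) (hA : Good a lam A)
      (h : IsKleshchev a (removeNode lam A)) : IsKleshchev a lam

/-! ### Weights and bead swaps -/

/-- `δ₊^M(t,s)`. -/
def deltaP {e r : ℕ} (M : Fin r → Fin e → Bool) (t s : Fin r) : ℕ :=
  (Finset.univ.filter (fun i => M t i = true ∧ M s i = false)).card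

/-- `wt^M(t,s)`. -/
def wtPair {e r : ℕ} (M : Fin r → Fin e → Bool) (t s : Fin r) : ℕ :=
  min (deltaP M t s) (deltaP M s t)

/-- `wt(M)`. -/
def wtM {e r : ℕ} (M : Fin r → Fin e → Bool) : ℕ :=
  ∑ t : Fin r, ∑ s ∈ Finset.univ.filter (· < t), wtPair M t s

/-- `M'` is obtained from `M` by a bead swap. -/
def BeadSwap {e r : ℕ} (M M' : Fin r → Fin e → Bool) : Prop :=
  ∃ i j : Fin e, i ≠ j ∧ ∃ s t : Fin r, s ≠ t ∧
    M s i = true ∧ M t j = true ∧ M s j = false ∧ M t i = false ∧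
    M' s i = false ∧ M' t j = false ∧ M' s j = true ∧ M' t i = true ∧
    (∀ s' i', (s' ≠ s ∧ s' ≠ t) ∨ (i' ≠ i ∧ i' ≠ j) → M' s' i' = M s' i')


/-! ### Weight graphs and the sets `T^y(i,j)` -/

/-- The weight graph of `M`. -/
def wGraph {e r : ℕ} (M : Fin r → Fin e → Bool) : SimpleGraph (Fin r) :=
  SimpleGraph.fromRel (fun s t => wtPair M s t = 1)

/-- The weight graph of `M` is a tree. -/
def GTree {e r : ℕ} (M : Fin r → Fin e → Bool) : Prop :=
  (∀ s t : Fin r, s ≠ t → wtPair M s t ≤ 1) ∧ (wGraph M).IsTree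

/-- The column vector `I(a)` (1-based rows `1,…,a` are ones). -/
def Ivec (r a : ℕ) : Fin r → Bool := fun s => decide (s.1 + 1 ≤ a)

/-- The condition `(i,j) ∈ P_t(y)`. -/
def PtPairCond (r t : ℕ) (y : ℕ → ℕ) (iseq : Fin t → ℕ) (jseq : Fin (t + 1) → ℕ) : Prop :=
  jseq 0 = 1 ∧ jseq (Fin.last t) = r ∧
  (∀ m : Fin t, jseq m.castSucc ≤ iseq m) ∧
  (∀ m : Fin t, iseq m < jseq m.succ) ∧
  (∀ m : Fin t, 1 ≤ y (iseq m))

/-- The column vector `c_m(i,j)`: `I(i_m)` with the entries in (1-based) rows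
`j_m` and `j_{m+1}` interchanged. -/
def cvec (r : ℕ) {t : ℕ} (iseq : Fin t → ℕ) (jseq : Fin (t + 1) → ℕ) (m : Fin t) :
    Fin r → Bool :=
  fun s =>
    if s.1 + 1 = jseq m.castSucc then decide (jseq m.succ ≤ iseq m)
    else if s.1 + 1 = jseq m.succ then decide (jseq m.castSucc ≤ iseq m)
    else decide (s.1 + 1 ≤ iseq m)

/-- The multiset of columns of a matrix. -/
def colMultiset {e r : ℕ} (M : Fin r → Fin e → Bool) : Multiset (Fin r → Bool) :=
  (Finset.univ.val : Multiset (Fin e)).map fun c => fun s => M s c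

/-- `M ∈ T^y(i,j)`. -/
def memT (r e : ℕ) (y : ℕ → ℕ) {t : ℕ} (iseq : Fin t → ℕ) (jseq : Fin (t + 1) → ℕ)
    (M : Fin r → Fin e → Bool) : Prop :=
  ∃ w0 wr : ℕ,
    colMultiset M =
      (∑ a ∈ Finset.Icc 1 (r - 1),
        Multiset.replicate (if ∃ m, iseq m = a then y a - 1 else y a) (Ivec r a))
      + ((Finset.univ.val : Multiset (Fin t)).map (cvec r iseq jseq))
      + Multiset.replicate w0 (Ivec r 0) + Multiset.replicate wr (Ivec r r)

theorem disj_reach {V : Type*} {G H K : SimpleGraph V} (hG : G.IsAcyclic) (hH : H ≤ G) (hK : K ≤ G)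
    (hd : ∀ u v, H.Adj u v → K.Adj u v → False) {u v : V} (huv : u ≠ v)
    (h1 : H.Reachable u v) (h2 : K.Reachable u v) : False := by
  obtain ⟨p, hp⟩ := h1.exists_isPath
  obtain ⟨q, hq⟩ := h2.exists_isPath
  have hpq := (hG.subsingleton_path u v).elim ⟨p.mapLe hH, hp.mapLe hH⟩ ⟨q.mapLe hK, hq.mapLe hK⟩
  have he : (p.mapLe hH).edges = (q.mapLe hK).edges := by
    rw [Subtype.mk.injEq] at hpq; rw [hpq]
  rw [SimpleGraph.Walk.edges_mapLe_eq_edges, SimpleGraph.Walk.edges_mapLe_eq_edges] at he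
  cases p with
  | nil => exact huv rfl
  | cons h p' =>
    rename_i w
    have hm : s(u, w) ∈ q.edges := by rw [← he]; simp only [SimpleGraph.Walk.edges_cons]; exact List.mem_cons_self
    exact hd _ _ h (SimpleGraph.Walk.adj_of_mem_edges _ hm)

theorem no_four {V : Type*} {G : SimpleGraph V} (hG : G.IsAcyclic) {a b c d : V}
    (hac : a ≠ c) (hbd : b ≠ d) (h1 : G.Adj a b) (h2 : G.Adj b c) (h3 : G.Adj a d) (h4 : G.Adj d c) :
    False := by
  have hp : (SimpleGraph.Walk.cons h1 (SimpleGraph.Walk.cons h2 SimpleGraph.Walk.nil)).IsPath := by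
    simp [h1.ne, h2.ne, hac]
  have hq : (SimpleGraph.Walk.cons h3 (SimpleGraph.Walk.cons h4 SimpleGraph.Walk.nil)).IsPath := by
    simp [h3.ne, h4.ne, hac]
  have := (hG.subsingleton_path a c).elim ⟨_, hp⟩ ⟨_, hq⟩
  simp at this
  exact hbd this.1

theorem tile {α : Type*} (lo hi : α → ℕ) (n : ℕ) : ∀ S : Finset α,
    (∀ c ∈ S, lo c < hi c ∧ hi c ≤ n) →
    (∀ s < n, ∃ c ∈ S, lo c ≤ s ∧ s < hi c) →
    (∀ s, ∀ c ∈ S, ∀ c' ∈ S, lo c ≤ s → s < hi c → lo c' ≤ s → s < hi c' → c = c') →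
    ∃ (t : ℕ) (col : Fin t → α) (j : ℕ → ℕ), S.val = (Finset.univ.val : Multiset (Fin t)).map col ∧
      j 0 = 0 ∧ j t = n ∧ t ≤ n ∧ ∀ m : Fin t, lo (col m) = j m ∧ hi (col m) = j (m + 1) := by
  induction n using Nat.strong_induction_on with
  | _ n ih =>
    intro S h1 h2 h3
    rcases Nat.eq_zero_or_pos n with rfl | hn
    · have : S = ∅ := by
        apply Finset.eq_empty_of_forall_notMem
        intro c hc
        have := h1 c hc
        omega
      subst this
      exact ⟨0, Fin.elim0, fun _ => 0, by simp, rfl, rfl, le_rfl, fun m => m.elim0⟩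
    · obtain ⟨c, hc, hc1, hc2⟩ := h2 (n-1) (by omega)
      have hcc := h1 c hc
      have key : ∀ c' ∈ S, c' ≠ c → hi c' ≤ lo c := by
        intro c' hc' hne
        by_contra hlt
        have := h1 c' hc'
        exact hne (h3 (max (lo c) (lo c')) c' hc' c hc (by omega) (by omega) (by omega) (by omega))
      obtain ⟨t, col, j, hS, hj0, hjt, htn, hm⟩ := ih (lo c) (by omega) (S.erase c)
        (by
          intro c' hc'
          rw [Finset.mem_erase] at hc'
          exact ⟨(h1 c' hc'.2).1, key c' hc'.2 hc'.1⟩)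
        (by
          intro s hs
          obtain ⟨c', hc', h⟩ := h2 s (by omega)
          refine ⟨c', Finset.mem_erase.2 ⟨?_, hc'⟩, h⟩
          rintro rfl
          omega)
        (by
          intro s a ha b hb
          exact h3 s a (Finset.mem_of_mem_erase ha) b (Finset.mem_of_mem_erase hb))
      refine ⟨t+1, Fin.snoc (α := fun _ => α) col c, fun x => if x = t + 1 then n else j x, ?_, ?_, ?_, ?_, ?_⟩
      · have : S.val = c ::ₘ (S.erase c).val := by
          rw [Finset.erase_val, Multiset.cons_erase hc]
        rw [this, hS]
        rw [Fin.univ_castSuccEmb]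
        simp [Function.comp_def]
      · simpa using hj0
      · simp
      · omega
      · intro m
        refine Fin.lastCases ?_ ?_ m
        · simp [hjt]; omega
        · intro m
          have := m.2
          simp only [Fin.snoc_castSucc, Fin.val_castSucc]
          rw [if_neg (by omega), if_neg (by omega)]
          exact hm m

theorem map_eq_sum {α β : Type*} (T : Finset α) (f : α → ℕ) (A : Finset ℕ) (g : ℕ → β)
    (h : ∀ c ∈ T, f c ∈ A) :
    T.val.map (fun c => g (f c)) = ∑ a ∈ A, Multiset.replicate (T.filter (fun c => f c = a)).card (g a) := by
  induction T using Finset.induction_on with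
  | empty => simp
  | insert c T hc ih =>
    rw [Finset.insert_val_of_notMem hc, Multiset.map_cons, ih (fun x hx => h x (Finset.mem_insert_of_mem hx))]
    have : ∀ a ∈ A, Multiset.replicate ((insert c T).filter (fun c => f c = a)).card (g a)
      = (if f c = a then {g a} else 0) + Multiset.replicate (T.filter (fun c => f c = a)).card (g a) := by
      intro a _
      rw [Finset.filter_insert]
      split_ifs with hh
      · rw [Finset.card_insert_of_notMem (by simp [hc]), Multiset.replicate_succ, Multiset.singleton_add]
      · simp
    rw [Finset.sum_congr rfl this, Finset.sum_add_distrib, Finset.sum_ite_eq, if_pos (h c (Finset.mem_insert_self _ _)),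
      Multiset.singleton_add]

theorem noninv {r : ℕ} (v : Fin r → Bool) (h : ∀ s t : Fin r, s < t → v s = false → v t = true → False) :
    ∃ a ≤ r, ∀ s : Fin r, v s = decide (s.1 + 1 ≤ a) := by
  by_cases hz : ∃ n : ℕ, ∃ h : n < r, v ⟨n, h⟩ = false
  · classical
    obtain ⟨hlt, hv⟩ := Nat.find_spec hz
    refine ⟨Nat.find hz, hlt.le, fun s => ?_⟩
    by_cases hs : s.1 + 1 ≤ Nat.find hz
    · have := Nat.find_min hz (m := s.1) (by omega)
      simp only [hs, decide_true]
      by_contra hc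
      exact this ⟨s.2, by simpa using hc⟩
    · simp only [hs, decide_false]
      by_cases hse : s.1 = Nat.find hz
      · rw [← hv]; congr 1; exact Fin.ext hse
      · by_contra hc
        exact h ⟨_, hlt⟩ s (by rw [Fin.lt_def]; simp only; omega) hv (by simpa using hc)
  · push Not at hz
    refine ⟨r, le_rfl, fun s => ?_⟩
    have := hz s.1 s.2
    have h2 := s.2
    simp only [Nat.succ_le_of_lt h2, decide_true]
    simpa using this

theorem inv_col {r : ℕ} (v : Fin r → Bool) (h : ∃ s t : Fin r, s < t ∧ v s = false ∧ v t = true)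
    (h4 : ∀ a b c d : Fin r, a < b → b < c → c < d → v a = false → v b = false → v c = true → v d = true → False) :
    ∃ lo hi a : ℕ, lo < hi ∧ hi < r ∧ lo + 1 ≤ a ∧ a ≤ hi ∧
      ∀ s : Fin r, v s = if s.1 = lo then false else if s.1 = hi then true else decide (s.1 + 1 ≤ a) := by
  obtain ⟨s, t, hst, hs, ht⟩ := h
  obtain ⟨lo, hlo, hlomin⟩ := (Finset.univ.filter (fun x => v x = false)).exists_minimal ⟨s, by simpa using hs⟩
  obtain ⟨hi, hhi, hhimax⟩ := (Finset.univ.filter (fun x => v x = true)).exists_maximal ⟨t, by simpa using ht⟩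
  simp only [Finset.mem_filter, Finset.mem_univ, true_and] at hlo hhi hlomin hhimax
  have lo_le : ∀ x, v x = false → lo ≤ x := fun x hx => by
    rcases le_total lo x with h | h
    · exact h
    · exact hlomin hx h
  have le_hi : ∀ x, v x = true → x ≤ hi := fun x hx => by
    rcases le_total x hi with h | h
    · exact h
    · exact hhimax hx h
  have hlh : lo < hi := lt_of_le_of_lt (lo_le s hs) (lt_of_lt_of_le hst (le_hi t ht))
  obtain ⟨m, hm, hmmax⟩ := (Finset.univ.filter (fun x => x < hi ∧ (x = lo ∨ (lo < x ∧ v x = true)))).exists_maximal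
    ⟨lo, by simpa using hlh⟩
  simp only [Finset.mem_filter, Finset.mem_univ, true_and] at hm hmmax
  have hml : lo ≤ m := by rcases hm.2 with h | h; exact h.ge; exact h.1.le
  refine ⟨lo, hi, m + 1, hlh, hi.2, by simpa using hml, hm.1, fun x => ?_⟩
  split_ifs with e1 e2
  · rw [Fin.ext e1, hlo]
  · rw [Fin.ext e2, hhi]
  · have e1' : x ≠ lo := fun h => e1 (by rw [h])
    have e2' : x ≠ hi := fun h => e2 (by rw [h])
    by_cases hx : x ≤ m
    · have : (x.1 + 1 ≤ m.1 + 1) := by simpa using hx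
      simp only [this, decide_true]
      by_contra hc
      have hc : v x = false := by simpa using hc
      have h1 : lo < x := lt_of_le_of_ne (lo_le x hc) (Ne.symm e1')
      rcases hm.2 with h | h
      · exact absurd hx (by rw [h]; exact not_le.2 h1)
      · exact h4 lo x m hi h1 (lt_of_le_of_ne hx (by rintro rfl; simp [hc] at h)) hm.1 hlo hc h.2 hhi
    · have : ¬ (x.1 + 1 ≤ m.1 + 1) := by simpa using hx
      simp only [this, decide_false]
      by_contra hc
      have hc : v x = true := by simpa using hc
      have hxh := lt_of_le_of_ne (le_hi x hc) e2'
      push Not at hx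
      exact absurd (hmmax ⟨hxh, Or.inr ⟨lt_of_le_of_lt hml hx, hc⟩⟩ hx.le) (not_le.2 hx)

theorem core (e r : ℕ) (hr : 2 ≤ r) (N : Fin r → Fin e → Bool) (G : SimpleGraph (Fin r))
    (hG : G.IsTree)
    (hadj : ∀ s t : Fin r, s < t → (G.Adj s t ↔ ∃ c, N s c = false ∧ N t c = true))
    (huniq : ∀ s t : Fin r, s < t → ∀ c c', N s c = false → N t c = true →
      N s c' = false → N t c' = true → c = c')
    (hrev : ∀ s t : Fin r, s < t → ∀ c, N s c = false → N t c = true →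
      ∃ c', N s c' = true ∧ N t c' = false) :
    ∃ y' : ℕ → ℕ, 1 ≤ y' 1 ∧ 1 ≤ y' (r - 1) ∧
      ∃ t' : ℕ, 1 ≤ t' ∧ t' ≤ r - 1 ∧
        ∃ (iseq : Fin t' → ℕ) (jseq : Fin (t' + 1) → ℕ),
          PtPairCond r t' y' iseq jseq ∧ memT r e y' iseq jseq N := by
  set S : Finset (Fin e) := Finset.univ.filter
    (fun c => ∃ s t : Fin r, s < t ∧ N s c = false ∧ N t c = true) with hSdef
  have hS : ∀ c, c ∈ S ↔ ∃ s t : Fin r, s < t ∧ N s c = false ∧ N t c = true := by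
    intro c; simp [hSdef]
  have h4 : ∀ col, ∀ a b c d : Fin r, a < b → b < c → c < d → N a col = false → N b col = false →
      N c col = true → N d col = true → False := by
    intro col a b c d hab hbc hcd ha hb hc hd
    have e1 := (hadj a c (hab.trans hbc)).2 ⟨col, ha, hc⟩
    have e2 := (hadj a d (hab.trans (hbc.trans hcd))).2 ⟨col, ha, hd⟩
    have e3 := (hadj b c hbc).2 ⟨col, hb, hc⟩
    have e4 := (hadj b d (hbc.trans hcd)).2 ⟨col, hb, hd⟩
    exact no_four hG.isAcyclic hab.ne hcd.ne e1 e3.symm e2 e4.symm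
  have hinv : ∀ c : Fin e, ∃ lo hi a : ℕ, c ∈ S → (lo < hi ∧ hi < r ∧ lo + 1 ≤ a ∧ a ≤ hi ∧
      ∀ s : Fin r, N s c = if s.1 = lo then false else if s.1 = hi then true
        else decide (s.1 + 1 ≤ a)) := by
    intro c
    by_cases hc : c ∈ S
    · obtain ⟨lo, hi, a, h⟩ := inv_col (fun s => N s c) ((hS c).1 hc) (h4 c)
      exact ⟨lo, hi, a, fun _ => h⟩
    · exact ⟨0, 0, 0, fun h => absurd h hc⟩
  choose lo hi ai hcol using hinv
  have hnon : ∀ c : Fin e, ∃ a : ℕ, c ∉ S → (a ≤ r ∧ ∀ s : Fin r, N s c = decide (s.1 + 1 ≤ a)) := by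
    intro c
    by_cases hc : c ∈ S
    · exact ⟨0, fun h => absurd hc h⟩
    · obtain ⟨a, ha⟩ := noninv (fun s => N s c) (by
        intro s t hst h1 h2
        exact hc ((hS c).2 ⟨s, t, hst, h1, h2⟩))
      exact ⟨a, fun _ => ha⟩
  choose ac hac using hnon
  -- positions of zeros and ones in inverted columns
  have hlo_le : ∀ c ∈ S, ∀ s : Fin r, N s c = false → lo c ≤ s.1 := by
    intro c hc s hs
    obtain ⟨h1, h2, h3, h4, h5⟩ := hcol c hc
    rw [h5 s] at hs
    split_ifs at hs with e1 e2
    · omega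
    · simp at hs; omega
  have hle_hi : ∀ c ∈ S, ∀ s : Fin r, N s c = true → s.1 ≤ hi c := by
    intro c hc s hs
    obtain ⟨h1, h2, h3, h4, h5⟩ := hcol c hc
    rw [h5 s] at hs
    split_ifs at hs with e1 e2
    · omega
    · simp at hs; omega
  have hNlo : ∀ c ∈ S, ∀ s : Fin r, s.1 = lo c → N s c = false := by
    intro c hc s hs
    obtain ⟨h1, h2, h3, h4, h5⟩ := hcol c hc
    rw [h5 s, if_pos hs]
  have hNhi : ∀ c ∈ S, ∀ s : Fin r, s.1 = hi c → N s c = true := by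
    intro c hc s hs
    obtain ⟨h1, h2, h3, h4, h5⟩ := hcol c hc
    rw [h5 s, if_neg (by omega), if_pos hs]
  -- cover
  have hcover : ∀ s < r - 1, ∃ c ∈ S, lo c ≤ s ∧ s < hi c := by
    intro s hs
    obtain ⟨p⟩ := hG.connected.preconnected ⟨0, by omega⟩ ⟨r - 1, by omega⟩
    obtain ⟨d, -, hd1, hd2⟩ := p.exists_boundary_dart {x | x.1 ≤ s} (by simp) (by simp; omega)
    simp only [Set.mem_ofPred_eq, not_le] at hd1 hd2
    have hlt : d.fst < d.snd := by rw [Fin.lt_def]; omega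
    obtain ⟨c, h1, h2⟩ := (hadj _ _ hlt).1 d.adj
    have hc : c ∈ S := (hS c).2 ⟨_, _, hlt, h1, h2⟩
    have := hlo_le c hc _ h1
    have := hle_hi c hc _ h2
    exact ⟨c, hc, by omega, by omega⟩
  -- column graphs
  let H : Fin e → SimpleGraph (Fin r) := fun c => SimpleGraph.fromRel
    (fun s t => s < t ∧ N s c = false ∧ N t c = true)
  have hH : ∀ c s t, (H c).Adj s t ↔ (s < t ∧ N s c = false ∧ N t c = true) ∨
      (t < s ∧ N t c = false ∧ N s c = true) := by
    intro c s t
    simp only [H, SimpleGraph.fromRel_adj]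
    constructor
    · exact fun h => h.2
    · intro h
      refine ⟨?_, h⟩
      rintro rfl
      rcases h with h | h <;> exact lt_irrefl _ h.1
  have hHG : ∀ c, H c ≤ G := by
    intro c s t h
    rcases (hH c s t).1 h with h | h
    · exact (hadj _ _ h.1).2 ⟨c, h.2⟩
    · exact ((hadj _ _ h.1).2 ⟨c, h.2⟩).symm
  have hHr : ∀ c ∈ S, ∀ s : Fin r, ∀ l : Fin r, l.1 = lo c → lo c ≤ s.1 → s.1 ≤ hi c →
      (H c).Reachable l s := by
    intro c hc s l hl h1 h2
    obtain ⟨g1, g2, -⟩ := hcol c hc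
    by_cases hsl : s = l
    · rw [hsl]
    have hne : s.1 ≠ l.1 := fun h => hsl (Fin.ext h)
    let k : Fin r := ⟨hi c, g2⟩
    have hlk : (H c).Adj l k := (hH c l k).2
      (Or.inl ⟨by rw [Fin.lt_def, hl]; exact g1, hNlo c hc l hl, hNhi c hc k rfl⟩)
    by_cases hv : N s c = true
    · apply SimpleGraph.Adj.reachable
      exact (hH c l s).2 (Or.inl ⟨by rw [Fin.lt_def]; omega, hNlo c hc l hl, hv⟩)
    · have hsk : s.1 ≠ hi c := fun h => hv (hNhi c hc s h)
      have : (H c).Adj s k := (hH c s k).2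
        (Or.inl ⟨by rw [Fin.lt_def]; show s.1 < hi c; omega, by simpa using hv, hNhi c hc k rfl⟩)
      exact hlk.reachable.trans this.symm.reachable
  have hdisj : ∀ s, ∀ c ∈ S, ∀ c' ∈ S, lo c ≤ s → s < hi c → lo c' ≤ s → s < hi c' → c = c' := by
    intro s c hc c' hc' h1 h2 h3 h4
    by_contra hne
    have g := hcol c hc
    have g' := hcol c' hc'
    have hs : s + 1 < r := by omega
    have R : ∀ c ∈ S, lo c ≤ s → s < hi c →
        (H c).Reachable (⟨s, by omega⟩ : Fin r) ⟨s + 1, hs⟩ := by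
      intro c hc h1 h2
      have A := hHr c hc ⟨s, by omega⟩ ⟨lo c, by omega⟩ rfl h1 h2.le
      have B := hHr c hc ⟨s + 1, hs⟩ ⟨lo c, by omega⟩ rfl (by simp only; omega) h2
      exact A.symm.trans B
    refine disj_reach hG.isAcyclic (hHG c) (hHG c') ?_ ?_ (R c hc h1 h2) (R c' hc' h3 h4)
    · intro u v hu hv
      rcases (hH c u v).1 hu with ⟨a1, a2, a3⟩ | ⟨a1, a2, a3⟩ <;>
      rcases (hH c' u v).1 hv with ⟨b1, b2, b3⟩ | ⟨b1, b2, b3⟩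
      · exact hne (huniq _ _ a1 c c' a2 a3 b2 b3)
      · exact lt_asymm a1 b1
      · exact lt_asymm a1 b1
      · exact hne (huniq _ _ a1 c c' a2 a3 b2 b3)
    · intro h
      have := congrArg Fin.val h
      simp at this
  obtain ⟨t, col, j, hSval, hj0, hjt, htn, hm⟩ := tile lo hi (r - 1) S
    (fun c hc => by have := hcol c hc; omega) hcover hdisj
  have hcolS : ∀ m, col m ∈ S := by
    intro m
    rw [← Finset.mem_val, hSval]
    exact Multiset.mem_map_of_mem _ (Finset.mem_univ m)
  have ht1 : 1 ≤ t := by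
    by_contra h
    have : t = 0 := by omega
    rw [this] at hjt
    omega
  let cnt : ℕ → ℕ := fun a => (Sᶜ.filter (fun c => ac c = a)).card
  let iseq : Fin t → ℕ := fun m => ai (col m)
  let jseq : Fin (t + 1) → ℕ := fun x => j x + 1
  have hcnt : ∀ c, c ∉ S → 1 ≤ cnt (ac c) := by
    intro c hc
    apply Finset.card_pos.2
    exact ⟨c, by simpa using hc⟩
  refine ⟨fun a => cnt a + if ∃ m, iseq m = a then 1 else 0, ?_, ?_, t, ht1, htn, iseq, jseq, ?_, ?_⟩
  · show 1 ≤ cnt 1 + if ∃ m, iseq m = 1 then 1 else 0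
    split_ifs with hi1
    · omega
    · let m0 : Fin t := ⟨0, ht1⟩
      have hne : ai (col m0) ≠ 1 := fun h => hi1 ⟨m0, h⟩
      have hc := hcolS m0
      obtain ⟨g1, g2, g3, g4, g5⟩ := hcol _ hc
      have hl : lo (col m0) = 0 := by rw [(hm m0).1]; exact hj0
      let s0 : Fin r := ⟨0, by omega⟩
      let s1 : Fin r := ⟨1, by omega⟩
      have v0 : N s0 (col m0) = false := hNlo _ hc _ hl.symm
      have v1 : N s1 (col m0) = true := by
        rw [g5 s1, if_neg (by simp only [s1]; omega), if_neg (by simp only [s1]; omega)]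
        simp only [s1, decide_eq_true_eq]; omega
      obtain ⟨c', w0, w1⟩ := hrev s0 s1 (by simp [s0, s1, Fin.lt_def]) _ v0 v1
      have hc' : c' ∉ S := by
        intro hc'
        have hl' : lo c' ≤ 1 := hlo_le c' hc' s1 w1
        have hh' := (hcol c' hc').1
        have := hdisj (lo c') _ hc c' hc' (by omega) (by omega) le_rfl hh'
        rw [this, w0] at v0
        exact absurd v0 (by simp)
      have q := hac c' hc'
      have q0 := q.2 s0
      have q1 := q.2 s1
      rw [w0] at q0
      rw [w1] at q1
      simp [s0] at q0
      simp [s1] at q1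
      have := hcnt c' hc'
      rw [show ac c' = 1 by omega] at this
      omega
  · show 1 ≤ cnt (r - 1) + if ∃ m, iseq m = r - 1 then 1 else 0
    split_ifs with hi1
    · omega
    · let m0 : Fin t := ⟨t - 1, by omega⟩
      have hne : ai (col m0) ≠ r - 1 := fun h => hi1 ⟨m0, h⟩
      have hc := hcolS m0
      obtain ⟨g1, g2, g3, g4, g5⟩ := hcol _ hc
      have hl : hi (col m0) = r - 1 := by
        rw [(hm m0).2, ← hjt]
        congr 1
        simp only [m0]; omega
      let s0 : Fin r := ⟨r - 2, by omega⟩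
      let s1 : Fin r := ⟨r - 1, by omega⟩
      have v1 : N s1 (col m0) = true := hNhi _ hc _ hl.symm
      have v0 : N s0 (col m0) = false := by
        rw [g5 s0, if_neg (by simp only [s0]; omega), if_neg (by simp only [s0]; omega)]
        simp only [s0, decide_eq_false_iff_not]; omega
      obtain ⟨c', w0, w1⟩ := hrev s0 s1 (by simp only [s0, s1, Fin.lt_def]; omega) _ v0 v1
      have hc' : c' ∉ S := by
        intro hc'
        have hl' : r - 2 ≤ hi c' := hle_hi c' hc' s0 w0
        have hh' := hcol c' hc'
        have hne2 : hi c' ≠ r - 1 := fun h => by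
          rw [hNhi c' hc' s1 h.symm] at w1
          exact absurd w1 (by simp)
        have := hdisj (hi c' - 1) _ hc c' hc' (by omega) (by omega) (by omega) (by omega)
        rw [this, w0] at v0
        exact absurd v0 (by simp)
      have q := hac c' hc'
      have q0 := q.2 s0
      have q1 := q.2 s1
      rw [w0] at q0
      rw [w1] at q1
      have q0 := of_decide_eq_true q0.symm
      have q1 := of_decide_eq_false q1.symm
      simp only [s0] at q0
      simp only [s1] at q1
      have := hcnt c' hc'
      rw [show ac c' = r - 1 by omega] at this
      omega
  · refine ⟨by simp [jseq, hj0], by simp only [jseq, Fin.val_last, hjt]; omega, ?_, ?_, ?_⟩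
    · intro m
      have := hcol _ (hcolS m)
      have h := (hm m).1
      simp only [jseq, iseq, Fin.val_castSucc]
      omega
    · intro m
      have := hcol _ (hcolS m)
      have h := (hm m).2
      simp only [jseq, iseq, Fin.val_succ]
      omega
    · intro m
      show 1 ≤ cnt (iseq m) + if ∃ m', iseq m' = iseq m then 1 else 0
      rw [if_pos ⟨m, rfl⟩]
      omega
  · refine ⟨cnt 0, cnt r, ?_⟩
    have hy : ∀ a, (if ∃ m, iseq m = a then (cnt a + if ∃ m, iseq m = a then 1 else 0) - 1
        else (cnt a + if ∃ m, iseq m = a then 1 else 0)) = cnt a := by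
      intro a
      split_ifs <;> omega
    have hA : (Sᶜ).val.map (fun c => fun s => N s c) =
        ∑ a ∈ Finset.range (r + 1), Multiset.replicate (cnt a) (Ivec r a) := by
      rw [← map_eq_sum Sᶜ ac (Finset.range (r + 1)) (Ivec r)]
      · apply Multiset.map_congr rfl
        intro c hc
        have hc : c ∉ S := by simpa using hc
        funext s
        exact (hac c hc).2 s
      · intro c hc
        have hc : c ∉ S := by simpa using hc
        have := (hac c hc).1
        simp; omega
    have hB : S.val.map (fun c => fun s => N s c) =
        (Finset.univ.val : Multiset (Fin t)).map (cvec r iseq jseq) := by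
      rw [hSval, Multiset.map_map]
      apply Multiset.map_congr rfl
      intro m _
      funext s
      obtain ⟨g1, g2, g3, g4, g5⟩ := hcol _ (hcolS m)
      obtain ⟨k1, k2⟩ := hm m
      simp only [Function.comp, cvec, jseq, iseq, Fin.val_castSucc, Fin.val_succ, add_left_inj]
      rw [g5 s, k1, k2]
      split_ifs
      · symm; simp; omega
      · symm; simp; omega
      · rfl
    have hsplit : colMultiset N = S.val.map (fun c => fun s => N s c) +
        (Sᶜ).val.map (fun c => fun s => N s c) := by
      rw [← Multiset.map_add]
      unfold colMultiset
      congr 1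
      rw [← Finset.disjUnion_val S Sᶜ disjoint_compl_right]
      simp
    have hR : ∑ a ∈ Finset.range (r + 1), Multiset.replicate (cnt a) (Ivec r a) =
        Multiset.replicate (cnt 0) (Ivec r 0) +
        (∑ a ∈ Finset.Icc 1 (r - 1), Multiset.replicate (cnt a) (Ivec r a)) +
        Multiset.replicate (cnt r) (Ivec r r) := by
      rw [Finset.sum_range_succ]
      congr 1
      have : Finset.range r = insert 0 (Finset.Icc 1 (r - 1)) := by
        ext x; simp; omega
      rw [this, Finset.sum_insert (by simp)]
    simp only [hy]
    rw [hsplit, hA, hB, hR]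
    abel

theorem zeros_delta {e r : ℕ} (M : Fin r → Fin e → Bool) (s t : Fin r) :
    deltaP M t s + (Finset.univ.filter (fun i => M s i = false ∧ M t i = false)).card =
      (Finset.univ.filter (fun i => M s i = false)).card := by
  unfold deltaP
  rw [← Finset.card_filter_add_card_filter_not (s := Finset.univ.filter (fun i => M s i = false))
    (fun i => M t i = true), Finset.filter_filter, Finset.filter_filter]
  congr 2
  · ext i; simp [and_comm]
  · ext i; simp

/-- Any matrix whose weight graph is a tree is row equivalent
to a matrix in some `T^{y'}(i',j')`. -/
theorem gtree_memT (e r : ℕ) (he : 2 ≤ e) (hr : 2 ≤ r)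
    (M : Fin r → Fin e → Bool) (hM : GTree M) :
    ∃ y' : ℕ → ℕ, 1 ≤ y' 1 ∧ 1 ≤ y' (r - 1) ∧
      ∃ t' : ℕ, 1 ≤ t' ∧ t' ≤ r - 1 ∧
        ∃ (iseq : Fin t' → ℕ) (jseq : Fin (t' + 1) → ℕ),
          PtPairCond r t' y' iseq jseq ∧
          ∃ σ : Equiv.Perm (Fin r), memT r e y' iseq jseq (fun s c => M (σ s) c) := by
  let f : Fin r → ℕ := fun s => (Finset.univ.filter (fun i => M s i = false)).card
  let σ : Equiv.Perm (Fin r) := Tuple.sort f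
  have hmono : Monotone (f ∘ σ) := Tuple.monotone_sort f
  obtain ⟨hwt, htree⟩ := hM
  have hle : ∀ s t : Fin r, s < t → deltaP M (σ t) (σ s) ≤ deltaP M (σ s) (σ t) := by
    intro s t hst
    have h := hmono hst.le
    have h1 := zeros_delta M (σ s) (σ t)
    have h2 := zeros_delta M (σ t) (σ s)
    have h3 : (Finset.univ.filter (fun i => M (σ s) i = false ∧ M (σ t) i = false)).card =
      (Finset.univ.filter (fun i => M (σ t) i = false ∧ M (σ s) i = false)).card := by
      congr 1; ext i; simp [and_comm]
    simp only [f, Function.comp] at h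
    omega
  have hsym : ∀ s t, wtPair M s t = wtPair M t s := fun s t => min_comm _ _
  have hw : ∀ s t : Fin r, s < t → wtPair M (σ s) (σ t) = deltaP M (σ t) (σ s) := by
    intro s t hst
    exact min_eq_right (hle s t hst)
  have hle1 : ∀ s t : Fin r, s < t → deltaP M (σ t) (σ s) ≤ 1 := by
    intro s t hst
    rw [← hw s t hst]
    exact hwt _ _ (fun h => hst.ne (σ.injective h))
  have hadjM : ∀ s t, (wGraph M).Adj s t ↔ s ≠ t ∧ wtPair M s t = 1 := by
    intro s t
    unfold wGraph
    rw [SimpleGraph.fromRel_adj, hsym t s, or_self]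
  have hpos : ∀ s t : Fin r, ∀ c, M (σ s) c = false → M (σ t) c = true →
      1 ≤ deltaP M (σ t) (σ s) := by
    intro s t c h1 h2
    exact Finset.card_pos.2 ⟨c, by simp [h1, h2]⟩
  obtain ⟨y, h1, h2, t, h3, h4, iseq, jseq, h5, h6⟩ := core e r hr (fun s c => M (σ s) c)
    ((wGraph M).comap σ) ((SimpleGraph.Iso.isTree_iff (SimpleGraph.Iso.comap σ (wGraph M))).2 htree)
    (by
      intro s t hst
      rw [SimpleGraph.comap_adj, hadjM, hw s t hst]
      constructor
      · rintro ⟨-, h⟩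
        obtain ⟨c, hc⟩ := Finset.card_pos.1 (show 0 < deltaP M (σ t) (σ s) by omega)
        simp only [Finset.mem_filter, Finset.mem_univ, true_and] at hc
        exact ⟨c, hc.2, hc.1⟩
      · rintro ⟨c, hc1, hc2⟩
        exact ⟨fun h => hst.ne (σ.injective h), le_antisymm (hle1 s t hst) (hpos s t c hc1 hc2)⟩)
    (by
      intro s t hst c c' a1 a2 b1 b2
      exact Finset.card_le_one.1 (hle1 s t hst) c (by simp [a1, a2]) c' (by simp [b1, b2]))
    (by
      intro s t hst c a1 a2
      have := (hpos s t c a1 a2).trans (hle s t hst)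
      obtain ⟨c', hc⟩ := Finset.card_pos.1 (show 0 < deltaP M (σ s) (σ t) by omega)
      simp only [Finset.mem_filter, Finset.mem_univ, true_and] at hc
      exact ⟨c', hc.1, hc.2⟩)
  exact ⟨y, h1, h2, t, h3, h4, iseq, jseq, h5, σ, h6⟩


end
end AK
end

section
/- Let e ≥ 2, r ≥ 1, let B be a base tuple, let L ∈ M(r,e), let i ∈ {1,…,e−1} and let k > 0. Then there exist m ≥ 0, residues i_1,…,i_m ∈ ℤ/e and integers k_1,…,k_m > 0 such that, in the free ℤ[v,v^{−1}]-module with basis the set of all r-multipartitions for the multicharge of Pt(B,L) (note that Pt(B,M) has the same multicharge as Pt(B,L) for every M with L →(i,k) M), F^{(k_m)}_{i_m} ⋯ F^{(k_1)}_{i_1} [Pt(B,L)] = Σ_{L →(i,k) M} v^{N_i(L,M)} [Pt(B,M)]. -/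
open scoped Classical

namespace AK
noncomputable section



/-! ### The operators `G^{(k)}_i` on the free `ℤ[v,v⁻¹]`-module with basis `M(r,e)` -/

/-- The column `i - 1`. -/
def colPred {e : ℕ} (i : Fin e) : Fin e :=
  ⟨i.1 - 1, Nat.lt_of_le_of_lt (Nat.sub_le _ _) i.isLt⟩

/-- `L →(i,k) M`: move `k` ones from column `i-1` to column `i`. -/
def GArrow {e r : ℕ} (i : Fin e) (k : ℕ) (L M : Fin r → Fin e → Bool) : Prop :=
  ∃ S : Finset (Fin r), S.card = k ∧
    (∀ s ∈ S, L s (colPred i) = true ∧ L s i = false) ∧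
    M = fun s c => if s ∈ S ∧ (c = colPred i ∨ c = i) then !(L s c) else L s c

/-- `N_i(L,M)` for `L →(i,k) M`. -/
def Nval {e r : ℕ} (i : Fin e) (L M : Fin r → Fin e → Bool) : ℤ :=
  ∑ a ∈ Finset.univ.filter (fun a : Fin r => ¬(L a i = M a i)),
    (((Finset.univ.filter
        (fun s : Fin r => a < s ∧ M s (colPred i) = true ∧ M s i = false)).card : ℤ)
      - ((Finset.univ.filter
        (fun s : Fin r => a < s ∧ L s (colPred i) = false ∧ L s i = true)).card : ℤ))

/-- The free `ℤ[v,v⁻¹]`-module on the set of `r × e` matrices. -/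
abbrev FM (r e : ℕ) := (Fin r → Fin e → Bool) →₀ LaurentPolynomial ℤ

/-- The operator `G^{(k)}_i`. -/
def Gop {e r : ℕ} (i : Fin e) (k : ℕ) (f : FM r e) : FM r e :=
  f.sum fun L c =>
    ∑ M ∈ Finset.univ.filter (fun M => GArrow i k L M),
      Finsupp.single M (c * LaurentPolynomial.T (Nval i L M))

/-- `G^{(k_m)}_{i_m} ⋯ G^{(k_1)}_{i_1}`, applied in order of the list. -/
def GopList {e r : ℕ} (ops : List (Fin e × ℕ)) (f : FM r e) : FM r e :=
  ops.foldl (fun g p => Gop p.1 p.2 g) f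

/-- Membership in `ℕ[v, v⁻¹]` (nonnegative Laurent polynomials). -/
def IsNNLaurent (a : LaurentPolynomial ℤ) : Prop :=
  ∃ f : ℤ →₀ ℕ, a = f.sum fun n c => (c : LaurentPolynomial ℤ) * LaurentPolynomial.T n

/-- Membership in `v·ℕ[v]`. -/
def IsVNPoly (a : LaurentPolynomial ℤ) : Prop :=
  ∃ f : ℤ →₀ ℕ, (∀ n ∈ f.support, 1 ≤ n) ∧
    a = f.sum fun n c => (c : LaurentPolynomial ℤ) * LaurentPolynomial.T n

/-! ### The operators `F^{(k)}_i` on the free `ℤ[v,v⁻¹]`-module on multipartitions -/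

/-- Multipartitions as raw part functions. -/
abbrev MP (r : ℕ) := Fin r → ℕ → ℕ

/-- `f` is a genuine partition. -/
def IsPartFun (f : ℕ → ℕ) : Prop :=
  Antitone f ∧ ∃ N, ∀ n, N ≤ n → f n = 0

/-- A node belongs to the Young diagram of `lam`. -/
def diagMem {r : ℕ} (lam : MP r) (A : Node r) : Prop :=
  A.2.2 < lam A.1 A.2.1

/-- `σ →(i,k) λ`: `λ` is obtained from `σ` by adding `k` nodes of residue `i`. -/
def AddK {e r : ℕ} (a : Fin r → ZMod e) (i : ZMod e) (k : ℕ) (sig lam : MP r) : Prop :=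
  (∀ s, IsPartFun (lam s)) ∧ (∀ s x, sig s x ≤ lam s x) ∧
  Set.ncard {A : Node r | diagMem lam A ∧ ¬ diagMem sig A} = k ∧
  (∀ A : Node r, diagMem lam A → ¬ diagMem sig A → res a A = i)

/-- `N_i(σ,λ)`. -/
def NvalF {e r : ℕ} (a : Fin r → ZMod e) (i : ZMod e) (sig lam : MP r) : ℤ :=
  ∑ᶠ A ∈ {A : Node r | diagMem lam A ∧ ¬ diagMem sig A},
    ((Set.ncard {C : Node r | Addable lam C ∧ res a C = i ∧ NodeAbove A C} : ℤ)
      - (Set.ncard {C : Node r | Removable sig C ∧ res a C = i ∧ NodeAbove A C} : ℤ))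

/-- The free `ℤ[v,v⁻¹]`-module on multipartitions. -/
abbrev FMP (r : ℕ) := MP r →₀ LaurentPolynomial ℤ

/-- The divided power `F^{(k)}_i`. -/
def Fop {e r : ℕ} (a : Fin r → ZMod e) (i : ZMod e) (k : ℕ) (f : FMP r) : FMP r :=
  f.sum fun sig c =>
    ∑ᶠ lam ∈ {lam : MP r | AddK a i k sig lam},
      Finsupp.single lam (c * LaurentPolynomial.T (NvalF a i sig lam))

/-- `F^{(k_m)}_{i_m} ⋯ F^{(k_1)}_{i_1}`, applied in order of the list. -/
def FopList {e r : ℕ} (a : Fin r → ZMod e) (ops : List (ZMod e × ℕ)) (f : FMP r) : FMP r :=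
  ops.foldl (fun g p => Fop a p.1 p.2 g) f

/-! ### Algebra of the operators -/

/-- All components are partitions. -/
def MPart {r : ℕ} (lam : MP r) : Prop := ∀ s, IsPartFun (lam s)

lemma zmod_one_ne {e : ℕ} (he : 2 ≤ e) : (1 : ZMod e) ≠ 0 := by
  have : Fact (1 < e) := ⟨he⟩
  exact one_ne_zero

lemma addK_le_succ {e r : ℕ} (he : 2 ≤ e) {a : Fin r → ZMod e} {j : ZMod e} {k : ℕ} {sig lam : MP r}
    (h : AddK a j k sig lam) (s : Fin r) (x : ℕ) : lam s x ≤ sig s x + 1 := by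
  by_contra hc
  push Not at hc
  obtain ⟨-, -, -, h4⟩ := h
  have h1 := h4 (s, x, sig s x) (by simp only [diagMem]; omega) (by simp [diagMem])
  have h2 := h4 (s, x, sig s x + 1) (by simp only [diagMem]; omega) (by simp [diagMem])
  rw [← h1] at h2
  simp only [res] at h2
  push_cast at h2
  apply zmod_one_ne he
  linear_combination h2

lemma addK_zero {e r : ℕ} (he : 2 ≤ e) {a : Fin r → ZMod e} {j : ZMod e} {k : ℕ} {sig lam : MP r}
    (h : AddK a j k sig lam) (s : Fin r) (x : ℕ) (h0 : sig s x = 0) (h1 : sig s (x + 1) = 0) :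
    lam s (x + 1) = 0 := by
  by_contra hc
  obtain ⟨h1', -, -, h4⟩ := h
  have hle : lam s (x + 1) ≤ lam s x := (h1' s).1 (Nat.le_succ x)
  have e1 := h4 (s, x, 0) (by simp only [diagMem]; omega) (by simp [diagMem, h0])
  have e2 := h4 (s, x + 1, 0) (by simp only [diagMem]; omega) (by simp [diagMem, h1])
  rw [← e1] at e2
  simp only [res] at e2
  push_cast at e2
  apply zmod_one_ne he
  linear_combination -e2

lemma mpart_bound {r : ℕ} {sig : MP r} (h : MPart sig) : ∃ N, ∀ s x, N ≤ x → sig s x = 0 := by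
  choose N hN using fun s => (h s).2
  refine ⟨Finset.univ.sup N, fun s x hx => hN s x ?_⟩
  exact le_trans (Finset.le_sup (f := N) (Finset.mem_univ s)) hx

lemma addK_finite {e r : ℕ} (he : 2 ≤ e) (a : Fin r → ZMod e) (j : ZMod e) (k : ℕ) {sig : MP r}
    (h : MPart sig) : {lam : MP r | AddK a j k sig lam}.Finite := by
  obtain ⟨N, hN⟩ := mpart_bound h
  refine ((((Finset.univ : Finset (Fin r)) ×ˢ Finset.range (N + 1)).powerset.finite_toSet).image
    (fun (D : Finset (Fin r × ℕ)) => (fun s x => sig s x + if (s, x) ∈ D then 1 else 0 : MP r))).subset ?_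
  intro lam hl
  refine ⟨((Finset.univ : Finset (Fin r)) ×ˢ Finset.range (N + 1)).filter
    (fun p => lam p.1 p.2 = sig p.1 p.2 + 1),
    by rw [Finset.mem_coe, Finset.mem_powerset]; exact Finset.filter_subset _ _, ?_⟩
  funext s x
  have h1 := addK_le_succ he hl s x
  have h2 := hl.2.1 s x
  by_cases hx : x < N + 1
  · simp [hx]
    split_ifs <;> omega
  · obtain ⟨y, rfl⟩ : ∃ y, x = y + 1 := ⟨x - 1, by omega⟩
    have h3 := addK_zero he hl s y (hN s y (by omega)) (hN s (y+1) (by omega))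
    simp [hx, h3]
    exact hN s _ (by omega)

lemma Fop_apply {e r : ℕ} (he : 2 ≤ e) (a : Fin r → ZMod e) (j : ZMod e) (k : ℕ) (f : FMP r)
    (hf : ∀ σ ∈ f.support, MPart σ) (lam : MP r) :
    Fop a j k f lam = ∑ σ ∈ f.support, if AddK a j k σ lam then
      f σ * LaurentPolynomial.T (NvalF a j σ lam) else 0 := by
  unfold Fop
  rw [Finsupp.sum, Finsupp.finsetSum_apply]
  refine Finset.sum_congr rfl fun σ hσ => ?_
  have hfin := addK_finite he a j k (hf σ hσ)
  rw [finsum_mem_eq_finite_toFinset_sum _ hfin, Finsupp.finsetSum_apply]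
  simp only [Finsupp.single_apply]
  rw [Finset.sum_ite_eq']
  simp

/-- Paths of adding nodes, with the accumulated exponent. -/
inductive Path {e r : ℕ} (a : Fin r → ZMod e) (σ : MP r) : List (ZMod e × ℕ) → MP r → ℤ → Prop
  | nil : Path a σ [] σ 0
  | snoc {l : List (ZMod e × ℕ)} {μ lam : MP r} {n : ℤ} {p : ZMod e × ℕ} (h : Path a σ l μ n)
      (h' : AddK a p.1 p.2 μ lam) : Path a σ (l ++ [p]) lam (n + NvalF a p.1 μ lam)

lemma FopList_snoc {e r : ℕ} (a : Fin r → ZMod e) (l : List (ZMod e × ℕ)) (p : ZMod e × ℕ)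
    (f : FMP r) : FopList a (l ++ [p]) f = Fop a p.1 p.2 (FopList a l f) := by
  simp [FopList]

lemma Path.mpart {e r : ℕ} {a : Fin r → ZMod e} {σ : MP r} (hσ : MPart σ) {l : List (ZMod e × ℕ)}
    {lam : MP r} {n : ℤ} (h : Path a σ l lam n) : MPart lam := by
  cases h with
  | nil => exact hσ
  | snoc h h' => exact h'.1

lemma Path.le {e r : ℕ} {a : Fin r → ZMod e} {σ : MP r} {l : List (ZMod e × ℕ)}
    {lam : MP r} {n : ℤ} (h : Path a σ l lam n) (s : Fin r) (x : ℕ) : σ s x ≤ lam s x := by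
  induction h with
  | nil => exact le_rfl
  | snoc h h' ih => exact ih.trans (h'.2.1 s x)

lemma Path.res_mem {e r : ℕ} {a : Fin r → ZMod e} {σ : MP r} {l : List (ZMod e × ℕ)}
    {lam : MP r} {n : ℤ} (h : Path a σ l lam n) (A : Node r) (h1 : diagMem lam A)
    (h2 : ¬ diagMem σ A) : res a A ∈ l.map Prod.fst := by
  induction h with
  | nil => exact absurd h1 h2
  | @snoc l μ lam n p h h' ih =>
    by_cases hm : diagMem μ A
    · have := ih hm
      simp only [List.map_append, List.mem_append]
      exact Or.inl this
    · have := h'.2.2.2 A h1 hm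
      simp [this]

lemma support_path {e r : ℕ} (he : 2 ≤ e) (a : Fin r → ZMod e) {σ : MP r} (hσ : MPart σ)
    (l : List (ZMod e × ℕ)) : ∀ lam ∈ (FopList a l (Finsupp.single σ 1)).support,
      ∃ n, Path a σ l lam n := by
  induction l using List.reverseRecOn with
  | nil =>
    intro lam hl
    have := Finsupp.support_single_subset hl
    simp at this
    subst this
    exact ⟨0, Path.nil⟩
  | append_singleton l p ih =>
    intro lam hl
    rw [FopList_snoc, Finsupp.mem_support_iff, Fop_apply he] at hl
    · obtain ⟨μ, hμ, hne⟩ := Finset.exists_ne_zero_of_sum_ne_zero hl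
      obtain ⟨n, hn⟩ := ih μ hμ
      by_cases hA : AddK a p.1 p.2 μ lam
      · exact ⟨_, hn.snoc hA⟩
      · simp [hA] at hne
    · intro μ hμ
      obtain ⟨n, hn⟩ := ih μ hμ
      exact hn.mpart hσ

lemma path_unique {e r : ℕ} {a : Fin r → ZMod e} {σ : MP r} {l : List (ZMod e × ℕ)}
    {p : ZMod e × ℕ} (hp : p.1 ∉ l.map Prod.fst) {μ μ' lam : MP r} {n n' : ℤ}
    (h : Path a σ l μ n) (h' : Path a σ l μ' n') (hA : AddK a p.1 p.2 μ lam)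
    (hA' : AddK a p.1 p.2 μ' lam) : μ = μ' := by
  have key : ∀ {μ μ' : MP r} {n n' : ℤ}, Path a σ l μ n → Path a σ l μ' n' →
      AddK a p.1 p.2 μ lam → AddK a p.1 p.2 μ' lam → ∀ s x, μ s x ≤ μ' s x := by
    intro μ μ' n n' h h' hA hA' s x
    by_contra hc
    push Not at hc
    have h1 : diagMem μ (s, x, μ' s x) := hc
    have h2 : ¬ diagMem μ' (s, x, μ' s x) := by simp [diagMem]
    have h3 : ¬ diagMem σ (s, x, μ' s x) := by
      have := h'.le s x
      simp only [diagMem]; omega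
    have h4 : diagMem lam (s, x, μ' s x) := lt_of_lt_of_le h1 (hA.2.1 s x)
    have h5 := h.res_mem _ h1 h3
    rw [hA'.2.2.2 _ h4 h2] at h5
    exact hp h5
  funext s x
  exact le_antisymm (key h h' hA hA' s x) (key h' h hA' hA s x)

lemma coeff_path {e r : ℕ} (he : 2 ≤ e) (a : Fin r → ZMod e) {σ : MP r} (hσ : MPart σ)
    {l : List (ZMod e × ℕ)} {lam : MP r} {n : ℤ} (h : Path a σ l lam n)
    (hl : (l.map Prod.fst).Nodup) :
    FopList a l (Finsupp.single σ 1) lam = LaurentPolynomial.T n := by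
  induction h with
  | nil => simp [FopList]
  | @snoc l μ lam n p h h' ih =>
    rw [List.map_append, List.nodup_append'] at hl
    obtain ⟨hl1, -, hl2⟩ := hl
    have hp : p.1 ∉ l.map Prod.fst := fun hh => hl2 hh (by simp)
    have ih' := ih hl1
    have hsupp := support_path he a hσ l
    rw [FopList_snoc, Fop_apply he _ _ _ _ (fun μ hμ => by
      obtain ⟨n, hn⟩ := hsupp μ hμ
      exact hn.mpart hσ)]
    rw [Finset.sum_eq_single μ]
    · rw [if_pos h', ih', ← LaurentPolynomial.T_add]
    · intro μ' hμ' hne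
      rw [if_neg]
      intro hA
      obtain ⟨n', hn'⟩ := hsupp μ' hμ'
      exact hne (path_unique hp hn' h hA h')
    · intro hn
      rw [Finsupp.notMem_support_iff] at hn
      rw [hn]; simp

/-! ### Beta sequences -/

/-- Beta sequence of a partition `f` with charge `n`. -/
def bet (n : ℤ) (f : ℕ → ℕ) (x : ℕ) : ℤ := f x + n - x - 1

lemma bet_strictAnti {n : ℤ} {f : ℕ → ℕ} (h : IsPartFun f) : StrictAnti (bet n f) := by
  apply strictAnti_nat_of_succ_lt
  intro x
  have := h.1 (Nat.le_succ x)
  simp only [bet]; push_cast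
  simp only [Nat.succ_eq_add_one] at this
  omega

lemma strictAnti_range_eq {f g : ℕ → ℤ} (hf : StrictAnti f) (hg : StrictAnti g)
    (h : Set.range f = Set.range g) : f = g := by
  have hf' : StrictMono (fun x => - f x) := fun a b hab => neg_lt_neg (hf hab)
  have hg' : StrictMono (fun x => - g x) := fun a b hab => neg_lt_neg (hg hab)
  have : (fun x => - f x) = (fun x => - g x) := by
    rw [← StrictMono.range_inj hf' hg']
    have h1 : Set.range (fun x => - f x) = Neg.neg '' Set.range f := by
      rw [← Set.range_comp]; rfl
    have h2 : Set.range (fun x => - g x) = Neg.neg '' Set.range g := by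
      rw [← Set.range_comp]; rfl
    rw [h1, h2, h]
  funext x
  have := congrFun this x
  simpa using this

lemma bet_range_eq {n n' : ℤ} {f f' : ℕ → ℕ} (hf : IsPartFun f) (hf' : IsPartFun f')
    (h : Set.range (bet n f) = Set.range (bet n' f')) : f = f' := by
  have h1 := strictAnti_range_eq (bet_strictAnti hf) (bet_strictAnti hf') h
  obtain ⟨N, hN⟩ := hf.2
  obtain ⟨N', hN'⟩ := hf'.2
  have h2 := congrFun h1 (max N N')
  simp only [bet, hN _ (le_max_left _ _), hN' _ (le_max_right _ _)] at h2
  have hn : n = n' := by omega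
  subst hn
  funext x
  have := congrFun h1 x
  simp only [bet] at this
  omega

/-- adding nodes by moving beads -/
lemma bet_move {n : ℤ} {f : ℕ → ℕ} (hf : IsPartFun f) {U Z : Set ℤ}
    (hU : ∀ z, z ∈ Set.range (bet n f) ↔ z ∈ U) (hZ : ∀ z ∈ Z, z - 1 ∈ U ∧ z ∉ U) :
    IsPartFun (fun x => f x + if bet n f x + 1 ∈ Z then 1 else 0) ∧
    ∀ z, z ∈ Set.range (bet n (fun x => f x + if bet n f x + 1 ∈ Z then 1 else 0)) ↔
      (z ∈ U ∧ z + 1 ∉ Z) ∨ z ∈ Z := by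
  have hmem : ∀ x, bet n f x ∈ U := fun x => (hU _).1 ⟨x, rfl⟩
  have hb : ∀ x, bet n (fun x => f x + if bet n f x + 1 ∈ Z then 1 else 0) x =
      bet n f x + if bet n f x + 1 ∈ Z then 1 else 0 := by
    intro x
    have h0 : bet n (fun x => f x + if bet n f x + 1 ∈ Z then 1 else 0) x =
      ((f x + if bet n f x + 1 ∈ Z then 1 else 0 : ℕ) : ℤ) + n - x - 1 := rfl
    rw [h0]
    by_cases h : bet n f x + 1 ∈ Z
    · rw [if_pos h, if_pos h]; simp only [bet]; push_cast; ring
    · rw [if_neg h, if_neg h]; simp only [bet]; push_cast; ring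
  have hnext : ∀ x, f (x + 1) = f x → bet n f (x + 1) + 1 ∉ Z := by
    intro x hx hc
    have h1 := (hZ _ hc).2
    apply h1
    have : bet n f (x + 1) + 1 = bet n f x := by
      simp only [bet]; rw [hx]; push_cast; ring
    rw [this]; exact hmem x
  refine ⟨⟨?_, ?_⟩, ?_⟩
  · apply antitone_nat_of_succ_le
    intro x
    have h1 : f (x + 1) ≤ f x := hf.1 (Nat.le_succ x)
    rcases Nat.lt_or_ge (f (x+1)) (f x) with h2 | h2
    · split_ifs <;> omega
    · have h3 : f (x + 1) = f x := le_antisymm h1 h2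
      rw [if_neg (hnext x h3), h3]; omega
  · obtain ⟨N, hN⟩ := hf.2
    refine ⟨N + 1, fun x hx => ?_⟩
    obtain ⟨y, rfl⟩ : ∃ y, x = y + 1 := ⟨x - 1, by omega⟩
    show f (y + 1) + (if bet n f (y + 1) + 1 ∈ Z then 1 else 0) = 0
    rw [if_neg (hnext y (by rw [hN _ (by omega), hN _ (by omega)])), hN _ (by omega)]
  · intro z
    constructor
    · rintro ⟨x, rfl⟩
      rw [hb]
      split_ifs with h
      · right; exact h
      · left
        rw [add_zero]
        exact ⟨hmem x, h⟩
    · rintro (⟨h1, h2⟩ | h)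
      · obtain ⟨x, rfl⟩ := (hU z).2 h1
        refine ⟨x, ?_⟩
        rw [hb, if_neg h2, add_zero]
      · obtain ⟨x, hx⟩ := (hU (z - 1)).2 (hZ z h).1
        refine ⟨x, ?_⟩
        rw [hb, hx, sub_add_cancel, if_pos h, sub_add_cancel]

/-! ### Decreasing enumerations -/

lemma tEnum_spec {T : Set ℤ} (hb : BddAbove T) (hl : ∀ z, z < 0 → z ∈ T) :
    StrictAnti (tEnum T) ∧ Set.range (tEnum T) = T := by
  have hne : ∀ y : ℤ, (T ∩ Set.Iio y).Nonempty := fun y =>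
    ⟨min y 0 - 1, hl _ (by have := min_le_right y 0; omega), by
      have := min_le_left y 0
      simp only [Set.mem_Iio]; omega⟩
  have hbb : ∀ y : ℤ, BddAbove (T ∩ Set.Iio y) := fun y => hb.mono Set.inter_subset_left
  have hmem : ∀ x, tEnum T x ∈ T := by
    intro x
    cases x with
    | zero => exact Int.csSup_mem ⟨-1, hl _ (by norm_num)⟩ hb
    | succ x => exact (Int.csSup_mem (hne _) (hbb _)).1
  have hlt : ∀ x, tEnum T (x + 1) < tEnum T x := fun x => (Int.csSup_mem (hne _) (hbb _)).2
  have hanti : StrictAnti (tEnum T) := strictAnti_nat_of_succ_lt hlt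
  refine ⟨hanti, Set.Subset.antisymm ?_ ?_⟩
  · rintro _ ⟨x, rfl⟩; exact hmem x
  · intro z hz
    -- find the least x with tEnum T x ≤ z
    have hex : ∃ x, tEnum T x ≤ z := by
      have hdec : ∀ x : ℕ, tEnum T x ≤ tEnum T 0 - x := by
        intro x
        induction x with
        | zero => simp
        | succ x ih => have := hlt x; push_cast; omega
      refine ⟨(tEnum T 0 - z).toNat, ?_⟩
      have := hdec (tEnum T 0 - z).toNat
      omega
    have h1 := Nat.find_spec hex
    refine ⟨Nat.find hex, le_antisymm h1 ?_⟩
    rcases hx : Nat.find hex with _ | x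
    · exact le_csSup hb hz
    · have h2 : ¬ tEnum T x ≤ z := Nat.find_min hex (by omega)
      exact le_csSup (hbb _) ⟨hz, by simpa using h2⟩

lemma enum_shape {T : Set ℤ} {t : ℕ → ℤ} (ht : StrictAnti t) (hr : Set.range t = T)
    (hl : ∀ z, z < 0 → z ∈ T) (n : ℕ) (F : Finset ℤ) (hF : ∀ z, z ∈ F ↔ z ∈ T ∧ 0 ≤ z)
    (hn : F.card = n) : (∀ x, 0 ≤ t x + (x + 1) - n) ∧ (∀ x, n ≤ x → t x + (x + 1) - n = 0) := by
  -- t x ≥ 0 iff x < n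
  have hiff : ∀ x, 0 ≤ t x ↔ x < n := by
    -- the set of x with t x ≥ 0 is an initial segment
    have himg : ∀ z, z ∈ F → ∃ x, t x = z := fun z hz => by
      have := ((hF z).1 hz).1; rw [← hr] at this; exact this
    have hneg : ∃ x, t x < 0 := by
      have := hl (-1) (by norm_num)
      rw [← hr] at this
      obtain ⟨x, hx⟩ := this
      exact ⟨x, by omega⟩
    set m := Nat.find hneg with hm
    have hmi : ∀ x, 0 ≤ t x ↔ x < m := by
      intro x
      constructor
      · intro h
        by_contra hc
        push Not at hc
        have h1 := ht.antitone hc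
        have h2 := Nat.find_spec hneg
        rw [← hm] at h2
        omega
      · intro h
        have := Nat.find_min hneg h
        omega
    have : F = (Finset.range m).image t := by
      ext z
      rw [hF, Finset.mem_image]
      constructor
      · rintro ⟨h1, h2⟩
        rw [← hr] at h1
        obtain ⟨x, rfl⟩ := h1
        exact ⟨x, Finset.mem_range.2 ((hmi x).1 h2), rfl⟩
      · rintro ⟨x, hx, rfl⟩
        exact ⟨hr ▸ ⟨x, rfl⟩, (hmi x).2 (Finset.mem_range.1 hx)⟩
    rw [this, Finset.card_image_of_injective _ ht.injective, Finset.card_range] at hn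
    rw [← hn]; exact hmi
  have htail : ∀ u : ℕ, t (n + u) = -1 - u := by
    intro u
    induction u with
    | zero =>
      have h1 : ¬ 0 ≤ t (n + 0) := by rw [hiff]; omega
      have h2 := hl (-1) (by norm_num)
      rw [← hr] at h2
      obtain ⟨y, hy⟩ := h2
      have h3 : ¬ y < n := by rw [← hiff]; omega
      have h4 := ht.antitone (show n + 0 ≤ y by omega)
      simp only [Nat.cast_zero]
      omega
    | succ u ih =>
      have h1 : t (n + (u + 1)) < t (n + u) := ht (by omega)
      have h2 := hl (-1 - ((u + 1 : ℕ) : ℤ)) (by omega)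
      rw [← hr] at h2
      obtain ⟨y, hy⟩ := h2
      have h3 : n + u < y := by
        rw [← ht.lt_iff_gt]; rw [hy, ih]; push_cast; omega
      have h4 := ht.antitone (show n + (u + 1) ≤ y by omega)
      push_cast at *
      omega
  have hge : ∀ d x : ℕ, t (x + d) + d ≤ t x := by
    intro d x
    induction d with
    | zero => simp
    | succ d ih =>
      have : t (x + (d + 1)) < t (x + d) := ht (by omega)
      push_cast; omega
  have hz : ∀ x, n ≤ x → t x + (x + 1) - n = 0 := by
    intro x hx
    obtain ⟨u, rfl⟩ := Nat.exists_eq_add_of_le hx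
    rw [htail]; push_cast; ring
  refine ⟨fun x => ?_, hz⟩
  rcases Nat.lt_or_ge x n with h | h
  · have h1 := hge (n - x) x
    rw [show x + (n - x) = n by omega] at h1
    have h2 := htail 0
    simp only [add_zero, Nat.cast_zero] at h2
    omega
  · exact (hz x h).ge

/-! ### Slots -/

/-- The runner with residue `j`. -/
def idx {e : ℕ} [NeZero e] (j : ZMod e) : Fin e := ⟨j.val, ZMod.val_lt j⟩

/-- The slot position of the runner `j`. -/
def slot {e : ℕ} [NeZero e] (B : Fin e → ℕ) (j : ZMod e) : ℤ := (j.val : ℤ) + e * B (idx j)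

/-- The column belonging to the runner `j`. -/
def rk {e : ℕ} [NeZero e] (B : Fin e → ℕ) (j : ZMod e) : Fin e := rank B (idx j)

lemma slot_cast {e : ℕ} [NeZero e] (B : Fin e → ℕ) (j : ZMod e) :
    ((slot B j : ℤ) : ZMod e) = j := by
  simp [slot]

lemma slot_inj {e : ℕ} [NeZero e] (B : Fin e → ℕ) {j l : ZMod e} (h : slot B j = slot B l) :
    j = l := by
  rw [← slot_cast B j, h, slot_cast]

lemma slot_nonneg {e : ℕ} [NeZero e] (B : Fin e → ℕ) (j : ZMod e) : 0 ≤ slot B j := by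
  unfold slot; positivity

lemma prec_iff {e : ℕ} [NeZero e] (B : Fin e → ℕ) (j l : ZMod e) :
    prec B (idx j) (idx l) ↔ slot B j < slot B l := by
  have h1 := ZMod.val_lt j
  have h2 := ZMod.val_lt l
  unfold prec slot
  have hlt : idx j < idx l ↔ j.val < l.val := Iff.rfl
  rw [hlt]
  constructor
  · rintro (h | ⟨h, h'⟩)
    · have : (e : ℤ) * (B (idx j) + 1) ≤ e * B (idx l) := by
        apply mul_le_mul_of_nonneg_left _ (by positivity)
        exact_mod_cast h
      rw [mul_add, mul_one] at this
      omega
    · rw [h]; omega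
  · intro h
    rcases lt_trichotomy (B (idx j)) (B (idx l)) with h3 | h3 | h3
    · exact Or.inl h3
    · right
      rw [h3] at h
      exact ⟨h3, by omega⟩
    · exfalso
      have : (e : ℤ) * (B (idx l) + 1) ≤ e * B (idx j) := by
        apply mul_le_mul_of_nonneg_left _ (by positivity)
        exact_mod_cast h3
      rw [mul_add, mul_one] at this
      omega

lemma idx_bij {e : ℕ} [NeZero e] : Function.Bijective (idx : ZMod e → Fin e) := by
  constructor
  · intro a b h
    apply ZMod.val_injective
    simpa [idx] using h
  · intro c
    refine ⟨(c.1 : ZMod e), ?_⟩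
    apply Fin.ext
    simp [idx, ZMod.val_natCast, Nat.mod_eq_of_lt c.2]

lemma rk_lt_of {e : ℕ} [NeZero e] (B : Fin e → ℕ) {j l : ZMod e} (h : slot B j < slot B l) :
    rk B j < rk B l := by
  show (Finset.univ.filter (fun c => prec B c (idx j))).card <
    (Finset.univ.filter (fun c => prec B c (idx l))).card
  apply Finset.card_lt_card
  rw [Finset.ssubset_iff_of_subset]
  · refine ⟨idx j, ?_, ?_⟩
    · simp [prec_iff, h]
    · simp [prec_iff]
  · intro c hc
    obtain ⟨c, rfl⟩ := idx_bij.2 c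
    simp only [Finset.mem_filter, Finset.mem_univ, true_and, prec_iff] at hc ⊢
    omega

lemma rk_lt_iff {e : ℕ} [NeZero e] (B : Fin e → ℕ) (j l : ZMod e) :
    rk B j < rk B l ↔ slot B j < slot B l := by
  refine ⟨fun h => ?_, rk_lt_of B⟩
  rcases lt_trichotomy (slot B j) (slot B l) with h1 | h1 | h1
  · exact h1
  · rw [slot_inj B h1] at h; exact absurd h (lt_irrefl _)
  · exact absurd (rk_lt_of B h1) (not_lt.2 h.le)

lemma rk_le_iff {e : ℕ} [NeZero e] (B : Fin e → ℕ) (j l : ZMod e) :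
    rk B j ≤ rk B l ↔ slot B j ≤ slot B l := by
  rw [← not_lt, rk_lt_iff, not_lt]

lemma rk_inj {e : ℕ} [NeZero e] (B : Fin e → ℕ) : Function.Injective (rk B) := by
  intro j l h
  apply slot_inj B
  apply le_antisymm
  · rw [← rk_le_iff, h]
  · rw [← rk_le_iff, h]

lemma rk_bij {e : ℕ} [NeZero e] (B : Fin e → ℕ) : Function.Bijective (rk B) := by
  rw [Fintype.bijective_iff_injective_and_card]
  exact ⟨rk_inj B, by simp [ZMod.card]⟩

/-! ### Bead sets -/

lemma mem_Tset {e r : ℕ} [NeZero e] (B : Fin e → ℕ) (M : Fin r → Fin e → Bool) (s : Fin r) (z : ℤ) :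
    z ∈ Tset B M s ↔ z < slot B (z : ZMod e) ∨
      (z = slot B (z : ZMod e) ∧ M s (rk B (z : ZMod e)) = true) := by
  have he : (0 : ℤ) < e := by exact_mod_cast Nat.pos_of_ne_zero (NeZero.ne e)
  have hs := slot_nonneg B (z : ZMod e)
  rcases lt_or_ge z 0 with hz | hz
  · constructor
    · intro _; left; omega
    · intro _; left; exact hz
  · obtain ⟨m, rfl⟩ := Int.eq_ofNat_of_zero_le hz
    have hidx : ∀ h : m % e < e, (⟨m % e, h⟩ : Fin e) = idx (((m : ℤ)) : ZMod e) := by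
      intro h
      apply Fin.ext
      simp [idx, ZMod.val_natCast]
    have hmod : m % e < e := Nat.mod_lt _ (Nat.pos_of_ne_zero (NeZero.ne e))
    have hval : ((((m : ℤ)) : ZMod e).val : ℤ) = (m % e : ℕ) := by
      simp [ZMod.val_natCast]
    have hm : (m : ℤ) = (m % e : ℕ) + e * (m / e : ℕ) := by
      exact_mod_cast (Nat.mod_add_div m e).symm
    have h1 : (m : ℤ) ∈ Tset B M s ↔ m / e < beads B M s (idx ((m : ℤ) : ZMod e)) := by
      unfold Tset
      simp only [Set.mem_ofPred_eq, Int.toNat_natCast]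
      constructor
      · rintro (h | ⟨-, h, h'⟩)
        · omega
        · rwa [hidx] at h'
      · intro h
        right
        refine ⟨by omega, hmod, ?_⟩
        rwa [hidx]
    rw [h1]
    unfold beads slot rk
    rw [hval]
    set b := B (idx ((m : ℤ) : ZMod e))
    have h2 : (m : ℤ) < (m % e : ℕ) + e * b ↔ m / e < b := by
      conv_lhs => rw [hm]
      constructor
      · intro h
        have : (e : ℤ) * (m / e : ℕ) < e * b := by omega
        exact_mod_cast lt_of_mul_lt_mul_left this he.le
      · intro h
        have : (e : ℤ) * (m / e : ℕ) < e * b := by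
          apply mul_lt_mul_of_pos_left _ he
          exact_mod_cast h
        omega
    have h3 : (m : ℤ) = (m % e : ℕ) + e * b ↔ m / e = b := by
      conv_lhs => rw [hm]
      constructor
      · intro h
        have : (e : ℤ) * (m / e : ℕ) = e * b := by omega
        exact_mod_cast mul_left_cancel₀ he.ne' this
      · intro h
        rw [h]
    rw [h2, h3]
    split_ifs with h
    · simp only [h, and_true]; omega
    · simp only [h]; simp

lemma Tset_neg {e r : ℕ} (B : Fin e → ℕ) (M : Fin r → Fin e → Bool) (s : Fin r) (z : ℤ) (hz : z < 0) :
    z ∈ Tset B M s := Or.inl hz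

/-- An upper bound for all the slots. -/
lemma slot_bound {e : ℕ} [NeZero e] (B : Fin e → ℕ) : ∃ H : ℤ, ∀ j, slot B j < H := by
  obtain ⟨H, hH⟩ := (Set.finite_range (slot B)).bddAbove
  exact ⟨H + 1, fun j => by have := hH ⟨j, rfl⟩; omega⟩

lemma Tset_bdd {e r : ℕ} [NeZero e] (B : Fin e → ℕ) (M : Fin r → Fin e → Bool) (s : Fin r) :
    BddAbove (Tset B M s) := by
  obtain ⟨H, hH⟩ := slot_bound B
  refine ⟨H, fun z hz => ?_⟩
  rw [mem_Tset] at hz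
  have := hH (z : ZMod e)
  rcases hz with h | ⟨h, -⟩ <;> omega

/-- The finite set of nonnegative beads. -/
def nnBeads {e r : ℕ} (B : Fin e → ℕ) (M : Fin r → Fin e → Bool) (s : Fin r) : Finset ℤ :=
  ((Finset.univ : Finset (Fin e)).sigma (fun i => Finset.range (beads B M s i))).image
    (fun p : (Σ _ : Fin e, ℕ) => ((p.1.1 + e * p.2 : ℕ) : ℤ))

lemma nnBeads_card {e r : ℕ} (B : Fin e → ℕ) (M : Fin r → Fin e → Bool) (s : Fin r) :
    (nnBeads B M s).card = nsum B M s := by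
  unfold nnBeads nsum
  rw [Finset.card_image_of_injective, Finset.card_sigma]
  · simp
  · rintro ⟨i, m⟩ ⟨i', m'⟩ h
    simp only [Nat.cast_inj] at h
    have hi := i.2
    have hi' := i'.2
    have h1 : (i.1 + e * m) % e = (i'.1 + e * m') % e := by rw [h]
    rw [Nat.add_mul_mod_self_left, Nat.add_mul_mod_self_left, Nat.mod_eq_of_lt hi,
      Nat.mod_eq_of_lt hi'] at h1
    have h2 : i = i' := Fin.ext h1
    subst h2
    have h3 : e * m = e * m' := by omega
    have h4 : m = m' := Nat.eq_of_mul_eq_mul_left (by omega) h3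
    subst h4
    rfl

lemma mem_nnBeads {e r : ℕ} [NeZero e] (B : Fin e → ℕ) (M : Fin r → Fin e → Bool) (s : Fin r) (z : ℤ) :
    z ∈ nnBeads B M s ↔ z ∈ Tset B M s ∧ 0 ≤ z := by
  have he : 0 < e := Nat.pos_of_ne_zero (NeZero.ne e)
  unfold nnBeads Tset
  simp only [Finset.mem_image, Finset.mem_sigma, Finset.mem_univ, true_and, Finset.mem_range,
    Set.mem_ofPred_eq]
  constructor
  · rintro ⟨⟨i, m⟩, h, rfl⟩
    refine ⟨Or.inr ⟨by positivity, ?_⟩, by positivity⟩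
    simp only [Int.toNat_natCast]
    refine ⟨Nat.mod_lt _ he, ?_⟩
    have h1 : (i.1 + e * m) % e = i.1 := by
      rw [Nat.add_mul_mod_self_left, Nat.mod_eq_of_lt i.2]
    have h2 : (i.1 + e * m) / e = m := by
      rw [Nat.add_mul_div_left _ _ he, Nat.div_eq_of_lt i.2, zero_add]
    simp only [h2]
    have : (⟨(i.1 + e * m) % e, Nat.mod_lt _ he⟩ : Fin e) = i := Fin.ext h1
    rw [this]; exact h
  · rintro ⟨h | ⟨h0, h1, h2⟩, hz⟩
    · omega
    · refine ⟨⟨⟨z.toNat % e, h1⟩, z.toNat / e⟩, h2, ?_⟩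
      simp only [Nat.mod_add_div]
      omega

lemma PtPart_spec {e r : ℕ} [NeZero e] (B : Fin e → ℕ) (M : Fin r → Fin e → Bool) (s : Fin r) :
    IsPartFun (PtPart B M s) ∧
      ∀ z, z ∈ Set.range (bet (nsum B M s) (PtPart B M s)) ↔ z ∈ Tset B M s := by
  obtain ⟨h1, h2⟩ := tEnum_spec (Tset_bdd B M s) (Tset_neg B M s)
  obtain ⟨h3, h4⟩ := enum_shape h1 h2 (Tset_neg B M s) (nsum B M s) (nnBeads B M s)
    (mem_nnBeads B M s) (nnBeads_card B M s)
  have h5 : bet (nsum B M s) (PtPart B M s) = tEnum (Tset B M s) := by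
    funext x
    simp only [bet, PtPart]
    rw [Int.toNat_of_nonneg (h3 x)]
    ring
  refine ⟨⟨?_, nsum B M s, fun x hx => ?_⟩, ?_⟩
  · apply antitone_nat_of_succ_le
    intro x
    have := h1 (Nat.lt_succ_self x)
    simp only [PtPart]
    apply Int.toNat_le_toNat
    push_cast
    simp only [Nat.succ_eq_add_one] at this
    omega
  · simp only [PtPart]; rw [h4 x hx]; rfl
  · intro z
    rw [h5, h2]

lemma PtPart_eq {e r : ℕ} [NeZero e] (B : Fin e → ℕ) (M : Fin r → Fin e → Bool) (s : Fin r) {n : ℤ}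
    {f : ℕ → ℕ} (hf : IsPartFun f) (h : ∀ z, z ∈ Set.range (bet n f) ↔ z ∈ Tset B M s) :
    f = PtPart B M s := by
  apply bet_range_eq hf (PtPart_spec B M s).1 (n := n) (n' := nsum B M s)
  ext z
  rw [h, (PtPart_spec B M s).2]

lemma PtPart_inj {e r : ℕ} [NeZero e] (B : Fin e → ℕ) {M M' : Fin r → Fin e → Bool} {n : Fin r → ℤ}
    (hM : ∀ s z, z ∈ Set.range (bet (n s) (PtPart B M s)) ↔ z ∈ Tset B M s)
    (hM' : ∀ s z, z ∈ Set.range (bet (n s) (PtPart B M' s)) ↔ z ∈ Tset B M' s)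
    (h : PtPart B M = PtPart B M') : M = M' := by
  funext s c
  obtain ⟨j, rfl⟩ := (rk_bij B).2 c
  have h1 := hM s (slot B j)
  have h2 := hM' s (slot B j)
  rw [h, h2, mem_Tset, mem_Tset, slot_cast] at h1
  simp at h1
  exact h1.symm

/-! ### The support -/

lemma res_bet {e r : ℕ} (n : Fin r → ℤ) (lam : MP r) (s : Fin r) (x : ℕ) :
    res (fun s => ((n s : ℤ) : ZMod e)) (s, x, lam s x) = ((bet (n s) (lam s) x + 1 : ℤ) : ZMod e) := by
  simp only [res, bet]; push_cast; ring

lemma addK_sum {e r : ℕ} (he : 2 ≤ e) (n : Fin r → ℤ) {j : ZMod e} {k : ℕ} {μ lam : MP r}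
    (hA : AddK (fun s => ((n s : ℤ) : ZMod e)) j k μ lam) (g : ℤ → ℤ) (h : ZMod e → ℤ)
    (hg : ∀ z : ℤ, g z - g (z - 1) = h (z : ZMod e)) (N : ℕ) (hN : ∀ s x, N ≤ x → lam s x = 0) :
    ∑ s, ∑ x ∈ Finset.range N, (g (bet (n s) (lam s) x) - g (bet (n s) (μ s) x)) = k * h j := by
  set I : Finset (Fin r × ℕ) := ((Finset.univ : Finset (Fin r)) ×ˢ Finset.range N).filter
    (fun p => lam p.1 p.2 = μ p.1 p.2 + 1) with hI
  have hD : {A : Node r | diagMem lam A ∧ ¬ diagMem μ A} =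
      ↑(I.image (fun p => ((p.1, p.2, μ p.1 p.2) : Node r))) := by
    ext ⟨s, x, y⟩
    simp only [Set.mem_ofPred_eq, diagMem, Finset.coe_image, Set.mem_image, hI,
      Finset.mem_coe, Finset.mem_filter, Finset.mem_product, Finset.mem_univ, true_and,
      Finset.mem_range, Prod.mk.injEq, Prod.exists]
    have h1 := addK_le_succ he hA s x
    constructor
    · rintro ⟨h2, h3⟩
      refine ⟨s, x, ⟨?_, by omega⟩, rfl, rfl, by omega⟩
      by_contra hc
      have := hN s x (by omega)
      omega
    · rintro ⟨s', x', ⟨h2, h3⟩, rfl, rfl, rfl⟩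
      omega
  have hk : I.card = k := by
    have := hA.2.2.1
    rw [hD, Set.ncard_coe_finset, Finset.card_image_of_injective] at this
    · exact this
    · rintro ⟨s, x⟩ ⟨s', x'⟩ hh
      simp only [Prod.mk.injEq] at hh
      simp [hh.1, hh.2.1]
  rw [← Finset.sum_product']
  have : ∀ p ∈ (Finset.univ : Finset (Fin r)) ×ˢ Finset.range N,
      (g (bet (n p.1) (lam p.1) p.2) - g (bet (n p.1) (μ p.1) p.2)) =
        if lam p.1 p.2 = μ p.1 p.2 + 1 then h j else 0 := by
    rintro ⟨s, x⟩ -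
    have h1 := addK_le_succ he hA s x
    have h2 := hA.2.1 s x
    simp only
    split_ifs with h3
    · have h4 := hA.2.2.2 (s, x, μ s x) (by simp only [diagMem]; omega) (by simp [diagMem])
      rw [res_bet] at h4
      have h5 := hg (bet (n s) (μ s) x + 1)
      rw [h4, add_sub_cancel_right] at h5
      rw [← h5]
      congr 2
      simp only [bet, h3]; push_cast; ring
    · have h4 : lam s x = μ s x := by omega
      simp [bet, h4]
  rw [Finset.sum_congr rfl this, ← Finset.sum_filter, Finset.sum_const, ← hI, hk]
  simp

lemma path_sum {e r : ℕ} (he : 2 ≤ e) (n : Fin r → ℤ) {σ lam : MP r} {l : List (ZMod e × ℕ)} {d : ℤ}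
    (hp : Path (fun s => ((n s : ℤ) : ZMod e)) σ l lam d) (g : ℤ → ℤ) (h : ZMod e → ℤ)
    (hg : ∀ z : ℤ, g z - g (z - 1) = h (z : ZMod e)) (N : ℕ) (hN : ∀ s x, N ≤ x → lam s x = 0) :
    ∑ s, ∑ x ∈ Finset.range N, (g (bet (n s) (lam s) x) - g (bet (n s) (σ s) x)) =
      (l.map (fun p => (p.2 : ℤ) * h p.1)).sum := by
  induction hp with
  | nil => simp
  | @snoc l μ lam d p hp hA ih =>
    have h1 := addK_sum he n hA g h hg N hN
    have h2 := ih (fun s x hx => by have := hA.2.1 s x; rw [hN s x hx] at this; omega)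
    rw [List.map_append, List.sum_append, ← h2]
    simp only [List.map_cons, List.map_nil, List.sum_cons, List.sum_nil, add_zero]
    rw [← h1, ← Finset.sum_add_distrib]
    refine Finset.sum_congr rfl fun s _ => ?_
    rw [← Finset.sum_add_distrib]
    refine Finset.sum_congr rfl fun x _ => ?_
    ring

lemma row_diff {n : ℤ} {f f' : ℕ → ℕ} (hf : IsPartFun f) (hf' : IsPartFun f') (N : ℕ)
    (hN : ∀ x, N ≤ x → f x = 0) (hN' : ∀ x, N ≤ x → f' x = 0) :
    ∃ X Y : Finset ℤ, (∀ z, z ∈ X ↔ z ∈ Set.range (bet n f') ∧ z ∉ Set.range (bet n f)) ∧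
      (∀ z, z ∈ Y ↔ z ∈ Set.range (bet n f) ∧ z ∉ Set.range (bet n f')) ∧
      ∀ u : ℤ → ℤ, ∑ x ∈ Finset.range N, (u (bet n f' x) - u (bet n f x)) =
        ∑ z ∈ X, u z - ∑ z ∈ Y, u z := by
  have key : ∀ {f f' : ℕ → ℕ}, IsPartFun f → IsPartFun f' → (∀ x, N ≤ x → f x = 0) →
      (∀ x, N ≤ x → f' x = 0) → ∀ z, z ∈ ((Finset.range N).image (bet n f') \
        (Finset.range N).image (bet n f)) ↔
        z ∈ Set.range (bet n f') ∧ z ∉ Set.range (bet n f) := by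
    intro f f' hf hf' hN hN' z
    have heq : ∀ x, N ≤ x → bet n f x = bet n f' x := fun x hx => by
      simp [bet, hN x hx, hN' x hx]
    simp only [Finset.mem_sdiff, Finset.mem_image, Finset.mem_range, Set.mem_range]
    constructor
    · rintro ⟨⟨x, hx, rfl⟩, h2⟩
      refine ⟨⟨x, rfl⟩, ?_⟩
      rintro ⟨y, hy⟩
      rcases Nat.lt_or_ge y N with hyN | hyN
      · exact h2 ⟨y, hyN, hy⟩
      · rw [heq y hyN] at hy
        have := (bet_strictAnti hf').injective hy
        omega
    · rintro ⟨⟨x, rfl⟩, h2⟩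
      refine ⟨⟨x, ?_, rfl⟩, ?_⟩
      · by_contra hc
        exact h2 ⟨x, heq x (by omega)⟩
      · rintro ⟨y, -, hy⟩
        exact h2 ⟨y, hy⟩
  refine ⟨_, _, key hf hf' hN hN', key hf' hf hN' hN, fun u => ?_⟩
  rw [Finset.sum_sub_distrib, Finset.sum_sdiff_sub_sum_sdiff,
    Finset.sum_image (fun a _ b _ h => (bet_strictAnti hf').injective h),
    Finset.sum_image (fun a _ b _ h => (bet_strictAnti hf).injective h)]

/-- integer valued indicator -/
def ind (p : Prop) : ℤ := if p then 1 else 0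

lemma ind_true {p : Prop} (h : p) : ind p = 1 := if_pos h
lemma ind_false {p : Prop} (h : ¬ p) : ind p = 0 := if_neg h

lemma support_matrix {e r : ℕ} [NeZero e] (B : Fin e → ℕ)
    (L : Fin r → Fin e → Bool) (i : Fin e) (hi : i.1 ≠ 0) (k : ℕ) (p q : ZMod e)
    (hp : rk B p = colPred i) (hq : rk B q = i) (lam : MP r) (hl : MPart lam)
    (hle : ∀ s x, PtPart B L s x ≤ lam s x)
    (hsum : ∀ (g : ℤ → ℤ) (h : ZMod e → ℤ), (∀ z : ℤ, g z - g (z - 1) = h (z : ZMod e)) →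
      ∀ (N : ℕ), (∀ s x, N ≤ x → lam s x = 0) →
      ∑ s, ∑ x ∈ Finset.range N,
        (g (bet (nsum B L s) (lam s) x) - g (bet (nsum B L s) (PtPart B L s) x)) =
          k * (g (slot B q) - g (slot B p))) :
    ∃ M, GArrow i k L M ∧ lam = PtPart B M := by
  obtain ⟨N, hN⟩ := mpart_bound hl
  have hσ : ∀ s, IsPartFun (PtPart B L s) := fun s => (PtPart_spec B L s).1
  have hNσ : ∀ s x, N ≤ x → PtPart B L s x = 0 := fun s x hx => by
    have := hle s x; rw [hN s x hx] at this; omega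
  choose X Y hX hY hXY using fun s => row_diff (n := (nsum B L s : ℤ)) (hσ s) (hl s) N (hNσ s) (hN s)
  have hT : ∀ s z, z ∈ Set.range (bet (nsum B L s) (PtPart B L s)) ↔ z ∈ Tset B L s :=
    fun s => (PtPart_spec B L s).2
  -- energy
  have hE := hsum (fun z => z - slot B (z : ZMod e)) (fun j => 1 - slot B j + slot B (j - 1))
    (by intro z; push_cast; ring) N hN
  simp only [slot_cast, sub_self, mul_zero] at hE
  have hXnn : ∀ s, ∀ z ∈ X s, 0 ≤ z - slot B (z : ZMod e) := by
    intro s z hz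
    have := ((hX s z).1 hz).2
    rw [hT, mem_Tset] at this
    push Not at this
    linarith [this.1]
  have hYnn : ∀ s, ∀ z ∈ Y s, z - slot B (z : ZMod e) ≤ 0 := by
    intro s z hz
    have := ((hY s z).1 hz).1
    rw [hT, mem_Tset] at this
    rcases this with h | ⟨h, -⟩ <;> omega
  have hrow : ∀ s, 0 ≤ ∑ x ∈ Finset.range N, ((bet (nsum B L s) (lam s) x -
      slot B ((bet (nsum B L s) (lam s) x : ℤ) : ZMod e)) - (bet (nsum B L s) (PtPart B L s) x -
      slot B ((bet (nsum B L s) (PtPart B L s) x : ℤ) : ZMod e))) := by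
    intro s
    rw [hXY s (fun z => z - slot B (z : ZMod e))]
    have h1 := Finset.sum_nonneg (hXnn s)
    have h2 := Finset.sum_nonpos (hYnn s)
    linarith
  have hrow0 := (Finset.sum_eq_zero_iff_of_nonneg (fun s _ => hrow s)).1 hE
  have hX0 : ∀ s, ∀ z ∈ X s, z = slot B (z : ZMod e) := by
    intro s z hz
    have h0 := hrow0 s (Finset.mem_univ s)
    rw [hXY s (fun z => z - slot B (z : ZMod e))] at h0
    have h1 := Finset.sum_nonneg (hXnn s)
    have h2 := Finset.sum_nonpos (hYnn s)
    have h3 := (Finset.sum_eq_zero_iff_of_nonneg (hXnn s)).1 (by linarith) z hz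
    linarith
  have hY0 : ∀ s, ∀ z ∈ Y s, z = slot B (z : ZMod e) := by
    intro s z hz
    have h0 := hrow0 s (Finset.mem_univ s)
    rw [hXY s (fun z => z - slot B (z : ZMod e))] at h0
    have h1 := Finset.sum_nonneg (hXnn s)
    have h2 := Finset.sum_nonpos (hYnn s)
    have h3 := (Finset.sum_eq_zero_iff_of_nonpos (hYnn s)).1 (by linarith) z hz
    linarith
  -- the matrix
  set U : Fin r → Set ℤ := fun s => Set.range (bet (nsum B L s) (lam s)) with hU
  obtain ⟨π, hπ1, hπ2⟩ := Function.bijective_iff_has_inverse.1 (rk_bij B)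
  set M : Fin r → Fin e → Bool := fun s c => decide (slot B (π c) ∈ U s) with hM
  have hMrk : ∀ s j, M s (rk B j) = true ↔ slot B j ∈ U s := by
    intro s j
    simp only [hM, hπ1 j, decide_eq_true_eq]
  have hLrk : ∀ s j, L s (rk B j) = true ↔ slot B j ∈ Tset B L s := by
    intro s j
    rw [mem_Tset, slot_cast]; simp
  have hlam : lam = PtPart B M := by
    funext s
    apply PtPart_eq B M s (n := nsum B L s) (hl s)
    intro z
    rw [mem_Tset, hMrk]
    rcases lt_trichotomy z (slot B (z : ZMod e)) with h | h | h
    · simp only [h, true_or, iff_true]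
      by_contra hc
      have hz : z ∈ Y s := (hY s z).2 ⟨by rw [hT, mem_Tset]; exact Or.inl h, hc⟩
      exact h.ne (hY0 s z hz)
    · rw [← h]; simp [hU]
    · have h1 : ¬ z < slot B (z : ZMod e) := by omega
      have h2 : ¬ z = slot B (z : ZMod e) := by omega
      simp only [h1, h2, false_and, or_false, iff_false]
      intro hc
      refine h2 (hX0 s z ((hX s z).2 ⟨hc, ?_⟩))
      rw [hT, mem_Tset]
      simp [h1, h2]
  refine ⟨M, ?_, hlam⟩
  -- flows
  set δ : Fin r → ZMod e → ℤ := fun s j => ind (M s (rk B j) = true) - ind (L s (rk B j) = true) with hδ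
  have hflow : ∀ s (u : ℤ → ℤ), ∑ x ∈ Finset.range N,
      (u (bet (nsum B L s) (lam s) x) - u (bet (nsum B L s) (PtPart B L s) x)) =
        ∑ j, u (slot B j) * δ s j := by
    intro s u
    have gen : ∀ Z : Finset ℤ, (∀ z ∈ Z, z = slot B (z : ZMod e)) →
        ∑ z ∈ Z, u z = ∑ j, u (slot B j) * ind (slot B j ∈ Z) := by
      intro Z hZ
      have h1 : Z = (Finset.univ.filter (fun j => slot B j ∈ Z)).image (slot B) := by
        ext z
        simp only [Finset.mem_image, Finset.mem_filter, Finset.mem_univ, true_and]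
        constructor
        · intro hz
          exact ⟨(z : ZMod e), by rw [← hZ z hz]; exact hz, (hZ z hz).symm⟩
        · rintro ⟨j, hj, rfl⟩; exact hj
      conv_lhs => rw [h1]
      rw [Finset.sum_image (fun a _ b _ h => slot_inj B h), Finset.sum_filter]
      refine Finset.sum_congr rfl fun j _ => ?_
      simp only [ind]
      split_ifs <;> simp
    rw [hXY s u, gen _ (hX0 s), gen _ (hY0 s), ← Finset.sum_sub_distrib]
    refine Finset.sum_congr rfl fun j _ => ?_
    rw [← mul_sub]
    congr 1
    simp only [hδ, hX, hY, hMrk, hLrk, hT, ind]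
    by_cases h1 : slot B j ∈ Set.range (bet (nsum B L s) (lam s)) <;> by_cases h2 : slot B j ∈ Tset B L s <;>
      simp [h1, h2, hU]
  set F : Fin r → ℕ → ℤ := fun s c => ∑ j, ind (c ≤ (rk B j).1) * δ s j with hF
  have hFtot : ∀ c : ℕ, ∑ s, F s c = if c = i.1 then (k : ℤ) else 0 := by
    intro c
    have h1 := hsum (fun z => ind (c ≤ (rk B (z : ZMod e)).1))
      (fun j => ind (c ≤ (rk B j).1) - ind (c ≤ (rk B (j - 1)).1)) (by intro z; push_cast; ring) N hN
    have h2 : ∀ s, F s c = ∑ x ∈ Finset.range N,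
      (ind (c ≤ (rk B ((bet (nsum B L s) (lam s) x : ℤ) : ZMod e)).1) -
        ind (c ≤ (rk B ((bet (nsum B L s) (PtPart B L s) x : ℤ) : ZMod e)).1)) := by
      intro s
      rw [hflow s (fun z => ind (c ≤ (rk B (z : ZMod e)).1))]
      simp only [slot_cast, hF]
    simp only [h2]
    rw [h1]
    simp only [slot_cast, hp, hq, colPred, ind]
    split_ifs <;> first | omega | simp
  have hFnn : ∀ s (c : ℕ), 0 ≤ F s c := by
    intro s c
    rcases Nat.lt_or_ge c e with hc | hc
    · have h2 := hflow s (fun z => ind (slot B (π ⟨c, hc⟩) ≤ z))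
      have h3 : F s c = ∑ j, ind (slot B (π ⟨c, hc⟩) ≤ slot B j) * δ s j := by
        simp only [hF]
        refine Finset.sum_congr rfl fun j _ => ?_
        have : c ≤ (rk B j).1 ↔ slot B (π ⟨c, hc⟩) ≤ slot B j := by
          rw [← rk_le_iff, hπ2]; rfl
        simp only [this]
      rw [h3, ← h2]
      apply Finset.sum_nonneg
      intro x _
      have h4 : bet (nsum B L s) (PtPart B L s) x ≤ bet (nsum B L s) (lam s) x := by
        have := hle s x
        simp only [bet]; omega
      simp only [ind]
      split_ifs <;> first | omega | simp
    · simp only [hF]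
      apply Finset.sum_nonneg
      intro j _
      rw [ind_false (by have := (rk B j).2; omega), zero_mul]
  have hF0 : ∀ s (c : ℕ), c ≠ i.1 → F s c = 0 := by
    intro s c hc
    have h1 := hFtot c
    rw [if_neg hc] at h1
    exact (Finset.sum_eq_zero_iff_of_nonneg (fun s _ => hFnn s c)).1 h1 s (Finset.mem_univ s)
  have hδF : ∀ s j, δ s j = F s (rk B j).1 - F s ((rk B j).1 + 1) := by
    intro s j
    simp only [hF]
    rw [← Finset.sum_sub_distrib, Finset.sum_eq_single j]
    · rw [ind_true le_rfl, ind_false (by omega)]; ring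
    · intro l _ hl
      have : (rk B l).1 ≠ (rk B j).1 := fun h => hl (rk_inj B (Fin.ext h))
      rw [← sub_mul]
      have h2 : ind ((rk B j).1 ≤ (rk B l).1) = ind ((rk B j).1 + 1 ≤ (rk B l).1) := by
        simp only [ind]; split_ifs <;> first | omega | rfl
      rw [h2]; simp
    · simp
  have hval : ∀ s c, ind (M s c = true) - ind (L s c = true) = F s c.1 - F s (c.1 + 1) := by
    intro s c
    obtain ⟨j, rfl⟩ := (rk_bij B).2 c
    exact hδF s j
  have hi1 : ∀ s, ind (M s i = true) - ind (L s i = true) = F s i.1 := by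
    intro s; rw [hval, hF0 s (i.1 + 1) (by omega), sub_zero]
  have hi2 : ∀ s, ind (M s (colPred i) = true) - ind (L s (colPred i) = true) = - F s i.1 := by
    intro s
    rw [hval, hF0 s (colPred i).1 (by simp only [colPred]; omega)]
    have : (colPred i).1 + 1 = i.1 := by simp only [colPred]; omega
    rw [this]; ring
  have hi3 : ∀ s c, c ≠ i → c ≠ colPred i → M s c = L s c := by
    intro s c h1 h2
    have h3 := hval s c
    have h4 : c.1 ≠ i.1 := fun h => h1 (Fin.ext h)
    have h5 : c.1 + 1 ≠ i.1 := fun h => h2 (Fin.ext (by simp only [colPred]; omega))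
    rw [hF0 s _ h4, hF0 s _ h5] at h3
    cases hm : M s c <;> cases hL : L s c <;> simp [hm, hL, ind] at h3 ⊢
  have hcase : ∀ s, (F s i.1 = 0 ∧ M s i = L s i ∧ M s (colPred i) = L s (colPred i)) ∨
      (F s i.1 = 1 ∧ M s i = true ∧ L s i = false ∧ M s (colPred i) = false ∧ L s (colPred i) = true) := by
    intro s
    have h1 := hi1 s
    have h2 := hi2 s
    have h3 := hFnn s i.1
    generalize F s i.1 = v at *
    cases hm : M s i <;> cases hL : L s i <;> cases hm' : M s (colPred i) <;>
      cases hL' : L s (colPred i) <;> simp [hm, hL, hm', hL', ind] at h1 h2 ⊢ <;> omega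
  refine ⟨Finset.univ.filter (fun s => F s i.1 = 1), ?_, ?_, ?_⟩
  · have h1 := hFtot i.1
    rw [if_pos rfl] at h1
    have h2 : ∀ s, F s i.1 = if F s i.1 = 1 then 1 else 0 := by
      intro s
      rcases hcase s with ⟨h, -⟩ | ⟨h, -⟩ <;> simp [h]
    rw [Finset.sum_congr rfl (fun s _ => h2 s), Finset.sum_ite] at h1
    simp at h1
    exact_mod_cast h1
  · intro s hs
    simp only [Finset.mem_filter, Finset.mem_univ, true_and] at hs
    rcases hcase s with ⟨h, -⟩ | ⟨h, h1, h2, h3, h4⟩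
    · omega
    · exact ⟨h4, h2⟩
  · funext s c
    simp only [Finset.mem_filter, Finset.mem_univ, true_and]
    by_cases h1 : c = i
    · subst h1
      rcases hcase s with ⟨h, h1, h2⟩ | ⟨h, h1, h2, h3, h4⟩
      · simp [h, h1]
      · simp [h, h1, h2]
    · by_cases h2 : c = colPred i
      · subst h2
        rcases hcase s with ⟨h, h1, h2⟩ | ⟨h, h1, h2, h3, h4⟩
        · simp [h, h2]
        · simp [h, h3, h4]
      · simp [h1, h2, hi3 s c h1 h2]

/-! ### One step of the construction -/

lemma addable_row {n : ℤ} {f : ℕ → ℕ} (hf : IsPartFun f) (x : ℕ) :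
    (x = 0 ∨ f x < f (x - 1)) ↔ bet n f x + 1 ∉ Set.range (bet n f) := by
  have hs := bet_strictAnti (n := n) hf
  constructor
  · rintro h ⟨y, hy⟩
    have h1 : y < x := by
      by_contra hc
      have := hs.antitone (not_lt.1 hc)
      omega
    have h2 : y ≤ x - 1 := by omega
    have h3 := hs.antitone h2
    have h4 : f x < f (x - 1) := by omega
    simp only [bet] at h3 hy
    omega
  · intro h
    by_contra hc
    push Not at hc
    apply h
    refine ⟨x - 1, ?_⟩
    have := hf.1 (show x - 1 ≤ x by omega)
    simp only [bet]
    omega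

lemma removable_row {n : ℤ} {f : ℕ → ℕ} (hf : IsPartFun f) (x : ℕ) :
    f (x + 1) < f x ↔ bet n f x - 1 ∉ Set.range (bet n f) := by
  have hs := bet_strictAnti (n := n) hf
  constructor
  · rintro h ⟨y, hy⟩
    have h1 : x < y := by
      by_contra hc
      have := hs.antitone (not_lt.1 hc)
      omega
    have h3 := hs.antitone (show x + 1 ≤ y from h1)
    simp only [bet] at h3 hy
    omega
  · intro h
    by_contra hc
    apply h
    refine ⟨x + 1, ?_⟩
    have := hf.1 (show x ≤ x + 1 by omega)
    simp only [bet]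
    omega

/-- chart on nodes -/
def nch {r : ℕ} (n : Fin r → ℤ) (C : Node r) : Fin r × ℤ := (C.1, n C.1 - C.2.1 + C.2.2)

lemma res_nch {e r : ℕ} (n : Fin r → ℤ) (C : Node r) :
    res (fun s => ((n s : ℤ) : ZMod e)) C = (((nch n C).2 : ℤ) : ZMod e) := by
  simp only [res, nch]; push_cast; ring

lemma ncard_addable {e r : ℕ} (he : 2 ≤ e) (n : Fin r → ℤ) {lam : MP r} (hl : MPart lam)
    {U : Fin r → Set ℤ} (hU : ∀ s z, z ∈ Set.range (bet (n s) (lam s)) ↔ z ∈ U s)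
    (j : ZMod e) (s : Fin r) (x : ℕ) (hz : ((bet (n s) (lam s) x : ℤ) : ZMod e) = j) (y : ℕ) (lo hi : ℤ)
    (hlo : ∀ s (z : ℤ), (z : ZMod e) = j → z < lo → z ∈ U s)
    (hhi : ∀ s (z : ℤ), (z : ZMod e) = j → hi < z → z - 1 ∉ U s) :
    (Set.ncard {C : Node r | Addable lam C ∧ res (fun s => ((n s : ℤ) : ZMod e)) C = j ∧
        NodeAbove (s, x, y) C} : ℤ) =
      ∑ s', ∑ z' ∈ Finset.Icc lo hi,
        if ((z' : ZMod e) = j ∧ (s < s' ∨ (s = s' ∧ z' < bet (n s) (lam s) x))) then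
          ind (z' - 1 ∈ U s' ∧ z' ∉ U s') else 0 := by
  have hinj : Set.InjOn (nch n) {C : Node r | Addable lam C ∧
      res (fun s => ((n s : ℤ) : ZMod e)) C = j ∧ NodeAbove (s, x, y) C} := by
    rintro ⟨s1, x1, y1⟩ ⟨⟨h1, -⟩, -⟩ ⟨s2, x2, y2⟩ ⟨⟨h2, -⟩, -⟩ h
    simp only [nch, Prod.mk.injEq] at h h1 h2
    obtain ⟨rfl, h⟩ := h
    subst h1 h2
    have : x1 = x2 := by
      apply (bet_strictAnti (n := n s1) (hl s1)).injective
      simp only [bet]; omega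
    subst this
    rfl
  have himg : nch n '' {C : Node r | Addable lam C ∧
      res (fun s => ((n s : ℤ) : ZMod e)) C = j ∧ NodeAbove (s, x, y) C} =
      ↑((Finset.univ ×ˢ Finset.Icc lo hi).filter (fun w : Fin r × ℤ =>
        ((w.2 : ZMod e) = j ∧ (s < w.1 ∨ (s = w.1 ∧ w.2 < bet (n s) (lam s) x))) ∧
          (w.2 - 1 ∈ U w.1 ∧ w.2 ∉ U w.1))) := by
    ext ⟨s', z'⟩
    simp only [Set.mem_image, Set.mem_ofPred_eq, Finset.coe_filter, Finset.mem_product,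
      Finset.mem_univ, true_and, Finset.mem_Icc]
    constructor
    · rintro ⟨⟨s1, x1, y1⟩, ⟨⟨h1, h2⟩, h3, h4⟩, h5⟩
      rw [res_nch] at h3
      rw [h5] at h3
      simp only [nch, Prod.mk.injEq] at h1 h2 h3 h5
      obtain ⟨rfl, h5⟩ := h5
      subst h1
      rw [addable_row (n := n s1) (hl s1), hU] at h2
      have h6 : z' = bet (n s1) (lam s1) x1 + 1 := by simp only [bet]; omega
      rw [← h6] at h2
      have h7 : z' - 1 ∈ U s1 := by rw [← hU]; exact ⟨x1, by omega⟩
      refine ⟨⟨?_, ?_⟩, ⟨h3, ?_⟩, h7, h2⟩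
      · by_contra hc; exact h2 (hlo s1 z' h3 (not_le.1 hc))
      · by_contra hc; exact hhi s1 z' h3 (not_le.1 hc) h7
      · rcases h4 with h4 | ⟨rfl, h4⟩
        · exact Or.inl h4
        · right
          refine ⟨rfl, ?_⟩
          have h8 := bet_strictAnti (n := n s) (hl s) h4
          simp only at h8
          have h9 : z' ≠ bet (n s) (lam s) x := by
            rintro h9
            exact h2 (by rw [← hU, h9]; exact ⟨x, rfl⟩)
          simp only at h6 h9
          omega
    · rintro ⟨-, ⟨h3, h4⟩, h7, h2⟩
      have h7' := h7
      rw [← hU] at h7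
      obtain ⟨x1, hx1⟩ := h7
      have h6 : z' = bet (n s') (lam s') x1 + 1 := by omega
      have h10 : nch n (s', x1, lam s' x1) = (s', z') := by
        simp only [nch, h6, bet, Prod.mk.injEq, true_and]; ring
      refine ⟨(s', x1, lam s' x1), ⟨⟨rfl, ?_⟩, ?_, ?_⟩, h10⟩
      · simp only
        rw [addable_row (n := n s') (hl s'), hU, ← h6]
        exact h2
      · rw [res_nch, h10]; exact h3
      · rcases h4 with h4 | ⟨rfl, h4⟩
        · exact Or.inl h4
        · right
          refine ⟨rfl, ?_⟩
          simp only
          rw [← (bet_strictAnti (n := n s) (hl s)).lt_iff_gt]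
          omega
  rw [← hinj.ncard_image, himg, Set.ncard_coe_finset, Finset.card_filter,
    Finset.sum_product]
  push_cast
  refine Finset.sum_congr rfl fun s' _ => Finset.sum_congr rfl fun z' _ => ?_
  rw [ite_and]
  simp only [ind]
  split_ifs <;> rfl

lemma ncard_removable {e r : ℕ} (he : 2 ≤ e) (n : Fin r → ℤ) {lam : MP r} (hl : MPart lam)
    {U : Fin r → Set ℤ} (hU : ∀ s z, z ∈ Set.range (bet (n s) (lam s)) ↔ z ∈ U s)
    (j : ZMod e) (s : Fin r) (x : ℕ) (hz : ((bet (n s) (lam s) x + 1 : ℤ) : ZMod e) = j)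
    (hz2 : bet (n s) (lam s) x + 1 ∉ U s) (y : ℕ) (lo hi : ℤ)
    (hlo : ∀ s (z : ℤ), (z : ZMod e) = j → z < lo → z - 1 ∈ U s)
    (hhi : ∀ s (z : ℤ), (z : ZMod e) = j → hi < z → z ∉ U s) :
    (Set.ncard {C : Node r | Removable lam C ∧ res (fun s => ((n s : ℤ) : ZMod e)) C = j ∧
        NodeAbove (s, x, y) C} : ℤ) =
      ∑ s', ∑ z' ∈ Finset.Icc lo hi,
        if ((z' : ZMod e) = j ∧ (s < s' ∨ (s = s' ∧ z' < bet (n s) (lam s) x + 1))) then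
          ind (z' ∈ U s' ∧ z' - 1 ∉ U s') else 0 := by
  have hinj : Set.InjOn (nch n) {C : Node r | Removable lam C ∧
      res (fun s => ((n s : ℤ) : ZMod e)) C = j ∧ NodeAbove (s, x, y) C} := by
    rintro ⟨s1, x1, y1⟩ ⟨⟨h1, -⟩, -⟩ ⟨s2, x2, y2⟩ ⟨⟨h2, -⟩, -⟩ h
    simp only [nch, Prod.mk.injEq] at h h1 h2
    obtain ⟨rfl, h⟩ := h
    have : x1 = x2 := by
      apply (bet_strictAnti (n := n s1) (hl s1)).injective
      simp only [bet]; omega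
    subst this
    have : y1 = y2 := by omega
    rw [this]
  have himg : nch n '' {C : Node r | Removable lam C ∧
      res (fun s => ((n s : ℤ) : ZMod e)) C = j ∧ NodeAbove (s, x, y) C} =
      ↑((Finset.univ ×ˢ Finset.Icc lo hi).filter (fun w : Fin r × ℤ =>
        ((w.2 : ZMod e) = j ∧ (s < w.1 ∨ (s = w.1 ∧ w.2 < bet (n s) (lam s) x + 1))) ∧
          (w.2 ∈ U w.1 ∧ w.2 - 1 ∉ U w.1))) := by
    ext ⟨s', z'⟩
    simp only [Set.mem_image, Set.mem_ofPred_eq, Finset.coe_filter, Finset.mem_product,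
      Finset.mem_univ, true_and, Finset.mem_Icc]
    constructor
    · rintro ⟨⟨s1, x1, y1⟩, ⟨⟨h1, h2⟩, h3, h4⟩, h5⟩
      rw [res_nch] at h3
      rw [h5] at h3
      simp only [nch, Prod.mk.injEq] at h1 h2 h3 h5
      obtain ⟨rfl, h5⟩ := h5
      rw [removable_row (n := n s1) (hl s1), hU] at h2
      have h6 : z' = bet (n s1) (lam s1) x1 := by simp only [bet]; omega
      rw [← h6] at h2
      have h7 : z' ∈ U s1 := by rw [← hU]; exact ⟨x1, by omega⟩
      refine ⟨⟨?_, ?_⟩, ⟨h3, ?_⟩, h7, h2⟩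
      · by_contra hc; exact h2 (hlo s1 z' h3 (not_le.1 hc))
      · by_contra hc; exact hhi s1 z' h3 (not_le.1 hc) h7
      · rcases h4 with h4 | ⟨rfl, h4⟩
        · exact Or.inl h4
        · right
          refine ⟨rfl, ?_⟩
          have h8 := bet_strictAnti (n := n s) (hl s) h4
          simp only at h8 h6
          omega
    · rintro ⟨-, ⟨h3, h4⟩, h7, h2⟩
      have h7' := h7
      rw [← hU] at h7
      obtain ⟨x1, hx1⟩ := h7
      have h6 : z' = bet (n s') (lam s') x1 := by omega
      have h11 : lam s' (x1 + 1) < lam s' x1 := by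
        rw [removable_row (n := n s') (hl s'), hU, ← h6]
        exact h2
      have h10 : nch n (s', x1, lam s' x1 - 1) = (s', z') := by
        simp only [nch, h6, bet, Prod.mk.injEq, true_and]; omega
      refine ⟨(s', x1, lam s' x1 - 1), ⟨⟨?_, ?_⟩, ?_, ?_⟩, h10⟩
      · simp only; omega
      · exact h11
      · rw [res_nch, h10]; exact h3
      · rcases h4 with h4 | ⟨rfl, h4⟩
        · exact Or.inl h4
        · right
          refine ⟨rfl, ?_⟩
          simp only
          rw [← (bet_strictAnti (n := n s) (hl s)).lt_iff_gt]
          have h12 : z' ≠ bet (n s) (lam s) x := by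
            intro h12
            rw [h12] at h3
            push_cast at hz
            rw [h3] at hz
            have := zmod_one_ne he
            exact this (by simpa using hz)
          omega
  rw [← hinj.ncard_image, himg, Set.ncard_coe_finset, Finset.card_filter,
    Finset.sum_product]
  push_cast
  refine Finset.sum_congr rfl fun s' _ => Finset.sum_congr rfl fun z' _ => ?_
  rw [ite_and]
  simp only [ind]
  split_ifs <;> rfl


lemma step {e r : ℕ} (he : 2 ≤ e) (n : Fin r → ℤ) {μ : MP r} (hμ : MPart μ)
    {U : Fin r → Set ℤ} (hU : ∀ s z, z ∈ Set.range (bet (n s) (μ s)) ↔ z ∈ U s)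
    (j : ZMod e) (S : Finset (Fin r)) (X : Finset ℤ) (hXj : ∀ z ∈ X, (z : ZMod e) = j)
    (hX : ∀ s ∈ S, ∀ z ∈ X, z - 1 ∈ U s ∧ z ∉ U s) (lo hi : ℤ)
    (hlo : ∀ s z, z < lo → z ∈ U s) (hhi : ∀ s z, hi ≤ z → z ∉ U s) :
    ∃ lam : MP r, MPart lam ∧
      (∀ s z, z ∈ Set.range (bet (n s) (lam s)) ↔
        (z ∈ U s ∧ ¬ (s ∈ S ∧ z + 1 ∈ X)) ∨ (s ∈ S ∧ z ∈ X)) ∧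
      AddK (fun s => ((n s : ℤ) : ZMod e)) j (S.card * X.card) μ lam ∧
      NvalF (fun s => ((n s : ℤ) : ZMod e)) j μ lam =
        ∑ s ∈ S, ∑ z ∈ X, ∑ s', ∑ z' ∈ Finset.Icc lo hi,
          if ((z' : ZMod e) = j ∧ (s < s' ∨ (s = s' ∧ z' < z))) then
            (if s' ∈ S ∧ z' ∈ X then 0 else ind (z' - 1 ∈ U s') - ind (z' ∈ U s')) else 0 := by
  have hne := zmod_one_ne he
  have hres1 : ∀ z : ℤ, (z : ZMod e) = j → z + 1 ∉ X := by
    intro z hz h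
    have := hXj _ h
    push_cast at this
    rw [hz] at this
    exact hne (by simpa using this)
  have hres2 : ∀ z : ℤ, (z : ZMod e) = j → z - 1 ∉ X := by
    intro z hz h
    have := hXj _ h
    push_cast at this
    rw [hz] at this
    exact hne (by simpa using this)
  obtain ⟨Z, hZdef⟩ : ∃ Z : Fin r → Set ℤ, ∀ s z, z ∈ Z s ↔ (s ∈ S ∧ z ∈ X) :=
    ⟨fun s => {z | s ∈ S ∧ z ∈ X}, fun s z => Iff.rfl⟩
  have hZ : ∀ s, ∀ z ∈ Z s, z - 1 ∈ U s ∧ z ∉ U s := fun s z hz => hX s ((hZdef s z).1 hz).1 z ((hZdef s z).1 hz).2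
  set lam : MP r := fun s x => μ s x + if bet (n s) (μ s) x + 1 ∈ Z s then 1 else 0 with hlam
  have hmv := fun s => bet_move (n := n s) (hμ s) (hU s) (hZ s)
  have hl : MPart lam := fun s => (hmv s).1
  set U' : Fin r → Set ℤ := fun s => {z | (z ∈ U s ∧ ¬ (s ∈ S ∧ z + 1 ∈ X)) ∨ (s ∈ S ∧ z ∈ X)} with hU'def
  have hU' : ∀ s z, z ∈ Set.range (bet (n s) (lam s)) ↔ z ∈ U' s := fun s z => by
    have := (hmv s).2 z
    rw [hZdef, hZdef] at this
    exact this
  have hDmem : ∀ s x y, ((s, x, y) : Node r) ∈ {A : Node r | diagMem lam A ∧ ¬ diagMem μ A} ↔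
      y = μ s x ∧ s ∈ S ∧ bet (n s) (μ s) x + 1 ∈ X := by
    intro s x y
    simp only [Set.mem_ofPred_eq, diagMem, hlam, hZdef]
    split_ifs with h
    · simp only [h, and_self, and_true]; omega
    · constructor
      · intro h'; omega
      · rintro ⟨-, h'⟩; exact absurd h' h
  have hbij : Set.BijOn (nch n) {A : Node r | diagMem lam A ∧ ¬ diagMem μ A} ↑(S ×ˢ X) := by
    refine ⟨?_, ?_, ?_⟩
    · rintro ⟨s, x, y⟩ h
      rw [hDmem] at h
      obtain ⟨rfl, h1, h2⟩ := h
      simp only [nch, Finset.coe_product, Set.mem_prod, Finset.mem_coe]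
      refine ⟨h1, ?_⟩
      convert h2 using 1
      simp only [bet]; ring
    · rintro ⟨s, x, y⟩ h ⟨s', x', y'⟩ h' heq
      rw [hDmem] at h h'
      obtain ⟨rfl, -⟩ := h
      obtain ⟨rfl, -⟩ := h'
      simp only [nch, Prod.mk.injEq] at heq
      obtain ⟨rfl, h⟩ := heq
      have : x = x' := by
        apply (bet_strictAnti (n := n s) (hμ s)).injective
        simp only [bet]; omega
      rw [this]
    · rintro ⟨s, z⟩ h
      simp only [Finset.coe_product, Set.mem_prod, Finset.mem_coe] at h
      have h1 := (hX s h.1 z h.2).1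
      rw [← hU] at h1
      obtain ⟨x, hx⟩ := h1
      refine ⟨(s, x, μ s x), ?_, ?_⟩
      · rw [hDmem]
        exact ⟨rfl, h.1, by rw [hx]; simpa using h.2⟩
      · simp only [nch, Prod.mk.injEq, true_and]
        simp only [bet] at hx
        omega
  refine ⟨lam, hl, hU', ⟨hl, ?_, ?_, ?_⟩, ?_⟩
  · intro s x; simp only [hlam]; omega
  · rw [← hbij.injOn.ncard_image, hbij.image_eq, Set.ncard_coe_finset, Finset.card_product]
  · intro A h1 h2
    have h3 := hbij.mapsTo (show A ∈ _ from ⟨h1, h2⟩)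
    rw [res_nch]
    simp only [Finset.coe_product, Set.mem_prod, Finset.mem_coe] at h3
    exact hXj _ h3.2
  · unfold NvalF
    rw [finsum_mem_eq_of_bijOn (g := fun w : Fin r × ℤ => ∑ s', ∑ z' ∈ Finset.Icc lo hi,
          if ((z' : ZMod e) = j ∧ (w.1 < s' ∨ (w.1 = s' ∧ z' < w.2))) then
            (if s' ∈ S ∧ z' ∈ X then 0 else ind (z' - 1 ∈ U s') - ind (z' ∈ U s')) else 0)
          (nch n) hbij, finsum_mem_coe_finset, Finset.sum_product]
    rintro ⟨s, x, y⟩ h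
    rw [hDmem] at h
    obtain ⟨rfl, hs, hzX⟩ := h
    have hbl : bet (n s) (lam s) x = bet (n s) (μ s) x + 1 := by
      have : lam s x = μ s x + 1 := by
        simp only [hlam]
        rw [if_pos ((hZdef _ _).2 ⟨hs, hzX⟩)]
      simp only [bet, this]; push_cast; ring
    have hch : nch n (s, x, μ s x) = (s, bet (n s) (μ s) x + 1) := by
      simp only [nch, bet, Prod.mk.injEq, true_and]; ring
    rw [ncard_addable he n hl hU' j s x (by rw [hbl]; exact hXj _ hzX) _ lo hi
        (fun s z hz h => Or.inl ⟨hlo s z h, fun h' => hres1 z hz h'.2⟩)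
        (fun s z hz h h' => by
          rcases h' with h' | h'
          · exact hhi s (z - 1) (by omega) h'.1
          · exact hres2 z hz h'.2),
      ncard_removable he n hμ hU j s x (hXj _ hzX) (hX s hs _ hzX).2 _ lo hi
        (fun s z hz h => hlo s _ (by omega)) (fun s z hz h => hhi s _ h.le),
      ← Finset.sum_sub_distrib, hch]
    refine Finset.sum_congr rfl fun s' _ => ?_
    rw [← Finset.sum_sub_distrib]
    refine Finset.sum_congr rfl fun z' _ => ?_
    rw [hbl]
    by_cases hc : ((z' : ZMod e) = j ∧ (s < s' ∨ (s = s' ∧ z' < bet (n s) (μ s) x + 1)))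
    · rw [if_pos hc, if_pos hc]
      simp only
      rw [if_pos hc]
      have e1 := hres1 z' hc.1
      have e2 := hres2 z' hc.1
      have m1 : z' ∈ U' s' ↔ (z' ∈ U s' ∨ (s' ∈ S ∧ z' ∈ X)) := by
        simp only [hU'def, Set.mem_ofPred_eq, e1, and_false, not_false_eq_true, and_true]
      have m2 : z' - 1 ∈ U' s' ↔ (z' - 1 ∈ U s' ∧ ¬ (s' ∈ S ∧ z' ∈ X)) := by
        simp only [hU'def, Set.mem_ofPred_eq, e2, and_false, or_false, sub_add_cancel]
      rw [m1, m2]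
      split_ifs with hin
      · have := hX s' hin.1 z' hin.2
        rw [ind_false (by tauto), ind_false (by tauto), sub_zero]
      · simp only [hin, or_false, not_false_eq_true, and_true]
        by_cases a1 : z' ∈ U s' <;> by_cases a2 : z' - 1 ∈ U s' <;> simp [ind, a1, a2]
    · rw [if_neg hc, if_neg hc]
      simp only
      rw [if_neg hc, sub_zero]

/-! ### Telescoping sums -/

lemma tele (G : ℤ → ℤ) (a b : ℤ) (h : a ≤ b) :
    ∑ z ∈ Finset.Ioc a b, (G (z - 1) - G z) = G a - G b := by
  induction b, h using Int.leInduction with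
  | base => simp
  | succ b hb ih =>
    have : Finset.Ioc a (b + 1) = insert (b + 1) (Finset.Ioc a b) := by
      ext z; simp only [Finset.mem_Ioc, Finset.mem_insert]; omega
    rw [this, Finset.sum_insert (by simp), ih, add_sub_cancel_right]
    ring

/-- the static difference function -/
def sD {r : ℕ} (T : Fin r → Set ℤ) (S : Finset (Fin r)) (P Q : ℤ) (s' : Fin r) (z' : ℤ) : ℤ :=
  if s' ∈ S ∧ z' ∈ Finset.Ioc P Q then 0 else ind (z' - 1 ∈ T s') - ind (z' ∈ T s')

lemma sD_sum {e r : ℕ} (he : 2 ≤ e) (sl : ZMod e → ℤ) (T : Fin r → Set ℤ)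
    (hTlt : ∀ s (z : ℤ), z < sl (z : ZMod e) → z ∈ T s) (hTgt : ∀ s (z : ℤ), sl (z : ZMod e) < z → z ∉ T s)
    (S : Finset (Fin r)) (P Q : ℤ) (hPQ : P < Q) (hP : sl (P : ZMod e) = P) (hQ : sl (Q : ZMod e) = Q)
    (hSP : ∀ s ∈ S, P ∈ T s) (hSQ : ∀ s ∈ S, Q ∉ T s) (s' : Fin r) (t : ℤ) :
    ∑ z ∈ Finset.Ioc P Q, sD T S P Q s' (z + t * e) =
      if s' ∉ S ∧ t = 0 then ind (P ∈ T s') - ind (Q ∈ T s') else 0 := by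
  have hcast : ∀ z : ℤ, ((z + t * e : ℤ) : ZMod e) = (z : ZMod e) := by
    intro z; push_cast; simp
  have he0 : (0 : ℤ) < e := by omega
  by_cases hs : s' ∈ S
  · rw [if_neg (by tauto)]
    rcases lt_trichotomy t 0 with ht | ht | ht
    · have hte : t * e < 0 := mul_neg_of_neg_of_pos ht he0
      have := tele (fun y => if y + t * e ≤ P then ind (y + t * e ∈ T s') else 1) P Q hPQ.le
      have h1 : P + t * e ∈ T s' := hTlt _ _ (by rw [hcast, hP]; omega)
      have h2 : Q + t * e ∈ T s' := hTlt _ _ (by rw [hcast, hQ]; omega)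
      simp only [ind_true h1, ind_true h2, ite_self, sub_self] at this
      rw [← this]
      refine Finset.sum_congr rfl fun z hz => ?_
      rw [Finset.mem_Ioc] at hz
      have e1 : z - 1 + t * e = z + t * e - 1 := by ring
      rw [e1]
      unfold sD
      simp only [hs, true_and, Finset.mem_Ioc]
      by_cases h3 : z + t * e ≤ P
      · rw [if_neg (by omega), if_pos (by omega), if_pos h3]
      · rw [if_pos (by omega), if_neg h3]
        split_ifs with h4
        · have : z + t * e - 1 = P := by omega
          rw [this, ind_true (hSP _ hs)]; rfl
        · rfl
    · subst ht
      apply Finset.sum_eq_zero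
      intro z hz
      unfold sD
      rw [if_pos]
      simpa [hs] using hz
    · have hte : 0 < t * e := mul_pos ht he0
      have := tele (fun y => if Q ≤ y + t * e then ind (y + t * e ∈ T s') else 0) P Q hPQ.le
      have h1 : P + t * e ∉ T s' := hTgt _ _ (by rw [hcast, hP]; omega)
      have h2 : Q + t * e ∉ T s' := hTgt _ _ (by rw [hcast, hQ]; omega)
      simp only [ind_false h1, ind_false h2, ite_self, sub_self] at this
      rw [← this]
      refine Finset.sum_congr rfl fun z hz => ?_
      rw [Finset.mem_Ioc] at hz
      have e1 : z - 1 + t * e = z + t * e - 1 := by ring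
      rw [e1]
      unfold sD
      simp only [hs, true_and, Finset.mem_Ioc]
      by_cases h3 : Q < z + t * e
      · rw [if_neg (by omega), if_pos (by omega), if_pos (by omega)]
      · rw [if_pos (by omega), if_neg (by omega)]
        split_ifs with h4
        · have : z + t * e = Q := by omega
          rw [this, ind_false (hSQ _ hs)]; rfl
        · rfl
  · have := tele (fun y => ind (y + t * e ∈ T s')) P Q hPQ.le
    have h0 : ∑ z ∈ Finset.Ioc P Q, sD T S P Q s' (z + t * e) =
        ind (P + t * e ∈ T s') - ind (Q + t * e ∈ T s') := by
      rw [← this]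
      refine Finset.sum_congr rfl fun z hz => ?_
      unfold sD
      rw [if_neg (by tauto)]
      have e1 : z - 1 + t * e = z + t * e - 1 := by ring
      rw [e1]
    rw [h0]
    rcases lt_trichotomy t 0 with ht | ht | ht
    · have hte : t * e < 0 := mul_neg_of_neg_of_pos ht he0
      have h1 : P + t * e ∈ T s' := hTlt _ _ (by rw [hcast, hP]; omega)
      have h2 : Q + t * e ∈ T s' := hTlt _ _ (by rw [hcast, hQ]; omega)
      rw [if_neg (by omega), ind_true h1, ind_true h2, sub_self]
    · subst ht; simp [hs]
    · have hte : 0 < t * e := mul_pos ht he0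
      have h1 : P + t * e ∉ T s' := hTgt _ _ (by rw [hcast, hP]; omega)
      have h2 : Q + t * e ∉ T s' := hTgt _ _ (by rw [hcast, hQ]; omega)
      rw [if_neg (by omega), ind_false h1, ind_false h2, sub_self]

lemma reindex {e : ℕ} (he : 2 ≤ e) (H z : ℤ) (hz0 : 0 ≤ z) (hzH : z ≤ H) (f : ℤ → ℤ)
    (hf : ∀ z', z' ∉ Finset.Icc 0 H → f z' = 0) :
    ∑ z' ∈ Finset.Icc 0 H, (if (z' : ZMod e) = (z : ZMod e) then f z' else 0) =
      ∑ t ∈ Finset.Icc (-H) H, f (z + t * e) := by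
  have he0 : (0 : ℤ) < e := by omega
  have hinj : Set.InjOn (fun t : ℤ => z + t * e) (Finset.Icc (-H) H : Finset ℤ) := by
    intro t _ t' _ h
    simp only [add_right_inj] at h
    exact mul_right_cancel₀ he0.ne' h
  rw [← Finset.sum_filter, ← Finset.sum_image (f := f) hinj]
  apply Finset.sum_subset
  · intro z' hz'
    rw [Finset.mem_filter, Finset.mem_Icc] at hz'
    obtain ⟨⟨h1, h2⟩, h3⟩ := hz'
    rw [ZMod.intCast_eq_intCast_iff_dvd_sub] at h3
    obtain ⟨c, hc⟩ := h3
    rw [Finset.mem_image]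
    refine ⟨-c, ?_, by linarith⟩
    rw [Finset.mem_Icc]
    constructor <;> nlinarith
  · intro z' hz' hn
    rw [Finset.mem_image] at hz'
    obtain ⟨t, -, rfl⟩ := hz'
    apply hf
    intro h
    apply hn
    rw [Finset.mem_filter]
    refine ⟨h, ?_⟩
    push_cast; simp

lemma static_total {e r : ℕ} (he : 2 ≤ e) (sl : ZMod e → ℤ) (T : Fin r → Set ℤ)
    (hTlt : ∀ s (z : ℤ), z < sl (z : ZMod e) → z ∈ T s) (hTgt : ∀ s (z : ℤ), sl (z : ZMod e) < z → z ∉ T s)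
    (S : Finset (Fin r)) (P Q : ℤ) (hPQ : P < Q) (hP : sl (P : ZMod e) = P) (hQ : sl (Q : ZMod e) = Q)
    (hSP : ∀ s ∈ S, P ∈ T s) (hSQ : ∀ s ∈ S, Q ∉ T s)
    (H : ℤ) (h0 : ∀ j, 0 ≤ sl j) (hH : ∀ j, sl j < H) :
    ∑ s ∈ S, ∑ z ∈ Finset.Ioc P Q, ∑ s', ∑ z' ∈ Finset.Icc 0 H,
      (if ((z' : ZMod e) = (z : ZMod e) ∧ (s < s' ∨ (s = s' ∧ z' < z))) then
        sD T S P Q s' z' else 0) =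
    ∑ s ∈ S, ∑ s', if s < s' ∧ s' ∉ S then ind (P ∈ T s') - ind (Q ∈ T s') else 0 := by
  have he0 : (0 : ℤ) < e := by omega
  have hP0 := h0 (P : ZMod e)
  have hQH := hH (Q : ZMod e)
  rw [hP] at hP0
  rw [hQ] at hQH
  have hneg : ∀ s z, z < 0 → z ∈ T s := fun s z hz => hTlt s z (by have := h0 (z : ZMod e); omega)
  have hpos : ∀ s z, H ≤ z → z ∉ T s := fun s z hz => hTgt s z (by have := hH (z : ZMod e); omega)
  have hD0 : ∀ s' z', z' ∉ Finset.Icc 0 H → sD T S P Q s' z' = 0 := by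
    intro s' z' h
    rw [Finset.mem_Icc] at h
    unfold sD
    split_ifs
    · rfl
    · rcases lt_or_ge z' 0 with h1 | h1
      · rw [ind_true (hneg _ _ h1), ind_true (hneg _ _ (by omega)), sub_self]
      · rw [ind_false (hpos _ _ (by omega)), ind_false (hpos _ _ (by omega)), sub_self]
  refine Finset.sum_congr rfl fun s hs => ?_
  rw [Finset.sum_comm]
  refine Finset.sum_congr rfl fun s' _ => ?_
  have h1 : ∀ z ∈ Finset.Ioc P Q, ∑ z' ∈ Finset.Icc 0 H,
      (if ((z' : ZMod e) = (z : ZMod e) ∧ (s < s' ∨ (s = s' ∧ z' < z))) then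
        sD T S P Q s' z' else 0) = ∑ t ∈ Finset.Icc (-H) H,
        if (s < s' ∨ (s = s' ∧ t < 0)) then sD T S P Q s' (z + t * e) else 0 := by
    intro z hz
    rw [Finset.mem_Ioc] at hz
    have := reindex he H z (by omega) (by omega)
      (fun z' => if (s < s' ∨ (s = s' ∧ z' < z)) then sD T S P Q s' z' else 0)
      (fun z' h => by rw [hD0 _ _ h, ite_self])
    simp only [ite_and] at this ⊢
    rw [this]
    refine Finset.sum_congr rfl fun t _ => ?_
    have h2 : z + t * e < z ↔ t < 0 := by
      constructor
      · intro h; by_contra hc; push Not at hc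
        have := mul_nonneg hc he0.le
        omega
      · intro h
        have := mul_neg_of_neg_of_pos h he0
        omega
    simp only [h2]
  rw [Finset.sum_congr rfl h1, Finset.sum_comm]
  have h2 : ∀ t ∈ Finset.Icc (-H) H, ∑ z ∈ Finset.Ioc P Q,
      (if (s < s' ∨ (s = s' ∧ t < 0)) then sD T S P Q s' (z + t * e) else 0) =
      if t = 0 then (if s < s' ∧ s' ∉ S then ind (P ∈ T s') - ind (Q ∈ T s') else 0) else 0 := by
    intro t _
    by_cases hc : (s < s' ∨ (s = s' ∧ t < 0))
    · simp only [hc, if_true]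
      rw [sD_sum he sl T hTlt hTgt S P Q hPQ hP hQ hSP hSQ]
      by_cases hs' : s' ∈ S
      · simp [hs']
      · have hc' : s < s' := by
          rcases hc with hc | ⟨rfl, -⟩
          · exact hc
          · exact absurd hs hs'
        simp [hs', hc']
    · simp only [hc, if_false, Finset.sum_const_zero]
      split_ifs with h3 h4
      · exact absurd (Or.inl h4.1) hc
      · rfl
      · rfl
  rw [Finset.sum_congr rfl h2, Finset.sum_ite_eq', if_pos]
  rw [Finset.mem_Icc]
  omega

/-! ### The order of the residues -/

lemma exists_key {e : ℕ} [NeZero e] (E : ZMod e → Prop) (hE : ∃ p, E p) (hF : ∃ q, ¬ E q) :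
    ∃ key : ZMod e → ℤ, (∀ j, E j → key j < key (j + 1)) ∧ (∀ j, ¬ E j → key (j + 1) < key j) := by
  set nE : ℤ := ((Finset.univ.filter E).card : ℤ) with hnE
  set nF : ℤ := ((Finset.univ.filter (fun j => ¬ E j)).card : ℤ) with hnF
  have hE0 : 0 < nE := by
    obtain ⟨p, hp⟩ := hE
    rw [hnE]; exact_mod_cast Finset.card_pos.2 ⟨p, by simpa using hp⟩
  have hF0 : 0 < nF := by
    obtain ⟨p, hp⟩ := hF
    rw [hnF]; exact_mod_cast Finset.card_pos.2 ⟨p, by simpa using hp⟩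
  set w : ZMod e → ℤ := fun j => if E j then nF else -nE with hw
  have hsum : ∑ j, w j = 0 := by
    simp only [hw]
    rw [Finset.sum_ite, Finset.sum_const, Finset.sum_const]
    simp only [nsmul_eq_mul]
    rw [← hnE, ← hnF]; ring
  have hsum' : ∑ t ∈ Finset.range e, w (t : ZMod e) = 0 := by
    rw [← hsum]
    refine Finset.sum_nbij' (fun t => (t : ZMod e)) (fun j => j.val) ?_ ?_ ?_ ?_ ?_
    · intros; simp
    · intro j _; simpa using ZMod.val_lt j
    · intro t ht; exact ZMod.val_cast_of_lt (by simpa using ht)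
    · intro j _; simp
    · intros; rfl
  set key : ZMod e → ℤ := fun j => ∑ t ∈ Finset.range j.val, w (t : ZMod e) with hkey
  have hstep : ∀ j, key (j + 1) = key j + w j := by
    intro j
    have hj := ZMod.val_lt j
    have h1 : key j + w j = ∑ t ∈ Finset.range (j.val + 1), w (t : ZMod e) := by
      rw [Finset.sum_range_succ, hkey]; simp
    rw [h1]
    rcases Nat.lt_or_ge (j.val + 1) e with h | h
    · have : (j + 1).val = j.val + 1 := by
        have h2 : j + 1 = ((j.val + 1 : ℕ) : ZMod e) := by push_cast; simp
        rw [h2, ZMod.val_cast_of_lt h]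
      simp only [hkey]; rw [this]
    · have h3 : j.val + 1 = e := by omega
      have h2 : j + 1 = 0 := by
        have h2 : j + 1 = ((j.val + 1 : ℕ) : ZMod e) := by push_cast; simp
        rw [h2, h3]; simp
      rw [h3, hsum', h2]
      simp [hkey]
  refine ⟨key, fun j hj => ?_, fun j hj => ?_⟩
  · rw [hstep]; simp only [hw, hj, if_true]; omega
  · rw [hstep]; simp only [hw, hj, if_false]; omega

lemma exists_sorted {α : Type*} (key : α → ℤ) (A : Finset α) :
    ∃ l : List α, l.Nodup ∧ (∀ x, x ∈ l ↔ x ∈ A) ∧ l.Pairwise (fun a b => key a ≤ key b) := by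
  have i1 : Std.Total (fun a b : α => key a ≤ key b) := ⟨fun a b => le_total _ _⟩
  have i2 : IsTrans α (fun a b : α => key a ≤ key b) := ⟨fun a b c h h' => le_trans h h'⟩
  refine ⟨A.toList.insertionSort (fun a b => key a ≤ key b), ?_, ?_, ?_⟩
  · exact (List.perm_insertionSort _ _).nodup_iff.2 A.nodup_toList
  · intro x; rw [(List.perm_insertionSort _ _).mem_iff, Finset.mem_toList]
  · exact List.pairwise_insertionSort _ _

lemma sorted_split {α : Type*} (key : α → ℤ) {l1 l2 : List α} {j : α}
    (hnd : (l1 ++ j :: l2).Nodup) (hp : (l1 ++ j :: l2).Pairwise (fun a b => key a ≤ key b)) :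
    j ∉ l1 ∧ (∀ x, key j < key x → x ∉ l1) ∧ (∀ x ∈ l1 ++ j :: l2, key x < key j → x ∈ l1) := by
  rw [List.pairwise_append] at hp
  obtain ⟨-, hp2, hp3⟩ := hp
  rw [List.pairwise_cons] at hp2
  refine ⟨?_, ?_, ?_⟩
  · intro h
    rw [List.nodup_append] at hnd
    exact hnd.2.2 j h j (by simp) rfl
  · intro x hx h
    have := hp3 x h j (by simp)
    omega
  · intro x hx h
    rw [List.mem_append, List.mem_cons] at hx
    rcases hx with hx | rfl | hx
    · exact hx
    · omega
    · have := hp2.1 x hx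
      omega

/-- Intermediate bead configurations. -/
def occ {e r : ℕ} (T : Fin r → Set ℤ) (S : Finset (Fin r)) (P Q : ℤ) (J : List (ZMod e)) (s : Fin r)
    (z : ℤ) : ℤ :=
  ind (z ∈ T s) + if s ∈ S then
    ind (z ∈ Finset.Ioc P Q ∧ (z : ZMod e) ∈ J) -
      ind (z + 1 ∈ Finset.Ioc P Q ∧ ((z + 1 : ℤ) : ZMod e) ∈ J) else 0

lemma ind_eq_one {p : Prop} : ind p = 1 ↔ p := by
  by_cases h : p <;> simp [ind, h]

lemma ind_congr {p p' : Prop} (h : p ↔ p') : ind p = ind p' := by rw [propext h]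

lemma chain {e r : ℕ} (he : 2 ≤ e) (sl : ZMod e → ℤ) (T : Fin r → Set ℤ)
    (hTlt : ∀ s (z : ℤ), z < sl (z : ZMod e) → z ∈ T s)
    (hTgt : ∀ s (z : ℤ), sl (z : ZMod e) < z → z ∉ T s)
    (S : Finset (Fin r)) (P Q : ℤ) (hPQ : P < Q) (hP : sl (P : ZMod e) = P) (hQ : sl (Q : ZMod e) = Q)
    (hsep : ∀ j, sl j ≤ P ∨ Q ≤ sl j)
    (hSP : ∀ s ∈ S, P ∈ T s) (hSQ : ∀ s ∈ S, Q ∉ T s)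
    (H : ℤ) (h0 : ∀ j, 0 ≤ sl j) (hH : ∀ j, sl j < H)
    (key : ZMod e → ℤ) (hkE : ∀ j, sl j ≤ P → key j < key (j + 1))
    (hkF : ∀ j, Q ≤ sl j → key (j + 1) < key j)
    (l : List (ZMod e)) (hnd : l.Nodup) (hsort : l.Pairwise (fun a b => key a ≤ key b))
    (hmem : ∀ z ∈ Finset.Ioc P Q, ((z : ℤ) : ZMod e) ∈ l)
    (n : Fin r → ℤ) {σ : MP r} (hσ : MPart σ)
    (hU : ∀ s z, z ∈ Set.range (bet (n s) (σ s)) ↔ z ∈ T s) :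
    ∀ l1 l2 : List (ZMod e), l = l1 ++ l2 → ∃ lam : MP r, MPart lam ∧
      (∀ s z, z ∈ Set.range (bet (n s) (lam s)) ↔ occ T S P Q l1 s z = 1) ∧
      Path (fun s => ((n s : ℤ) : ZMod e)) σ
        (l1.map (fun j => (j, S.card * ((Finset.Ioc P Q).filter (fun z : ℤ => (z : ZMod e) = j)).card)))
        lam
        ((l1.map (fun j => ∑ s ∈ S, ∑ z ∈ (Finset.Ioc P Q).filter (fun z : ℤ => (z : ZMod e) = j),
          ∑ s', ∑ z' ∈ Finset.Icc 0 H,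
          (if ((z' : ZMod e) = (z : ZMod e) ∧ (s < s' ∨ (s = s' ∧ z' < z))) then
            sD T S P Q s' z' else 0))).sum) := by
  have hne := zmod_one_ne he
  have hP0 := h0 (P : ZMod e)
  have hQH := hH (Q : ZMod e)
  rw [hP] at hP0
  rw [hQ] at hQH
  have hneg : ∀ s z, z < 0 → z ∈ T s := fun s z hz => hTlt s z (by have := h0 (z : ZMod e); omega)
  have hpos : ∀ s z, H ≤ z → z ∉ T s := fun s z hz => hTgt s z (by have := hH (z : ZMod e); omega)
  intro l1
  induction l1 using List.reverseRecOn with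
  | nil =>
    intro l2 _
    refine ⟨σ, hσ, fun s z => ?_, Path.nil⟩
    rw [hU]
    simp [occ, ind]
  | append_singleton J j ih =>
    intro l2 hl
    have hl' : l = J ++ j :: l2 := by simpa using hl
    obtain ⟨μ, hμ, hμU, hpath⟩ := ih (j :: l2) hl'
    rw [hl'] at hnd hsort hmem
    obtain ⟨hjJ, hgt, hlt⟩ := sorted_split key hnd hsort
    set X : Finset ℤ := (Finset.Ioc P Q).filter (fun z : ℤ => (z : ZMod e) = j) with hXdef
    have hXmem : ∀ z, z ∈ X ↔ (P < z ∧ z ≤ Q) ∧ (z : ZMod e) = j := by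
      intro z; rw [hXdef, Finset.mem_filter, Finset.mem_Ioc]
    -- occupancy at a moved position
    have hocc0 : ∀ s ∈ S, ∀ z ∈ X, occ T S P Q J s z = 0 := by
      intro s hs z hz
      rw [hXmem] at hz
      obtain ⟨⟨hz1, hz2⟩, hz3⟩ := hz
      unfold occ
      rw [if_pos hs, ind_false (p := z ∈ Finset.Ioc P Q ∧ _) (by rw [hz3]; tauto)]
      rcases eq_or_lt_of_le hz2 with hzQ | hzQ
      · rw [ind_false (by rw [hzQ]; exact hSQ s hs), ind_false (by rw [Finset.mem_Ioc]; omega)]; rfl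
      · have hz4 : z + 1 ∈ Finset.Ioc P Q := by rw [Finset.mem_Ioc]; omega
        have hz5 := hmem _ hz4
        have hz6 : ((z + 1 : ℤ) : ZMod e) = j + 1 := by push_cast; rw [hz3]
        rw [hz6] at hz5 ⊢
        rcases hsep j with h | h
        · rw [ind_false (hTgt s z (by rw [hz3]; omega)),
            ind_false (fun h' => hgt _ (hkE j h) h'.2)]; rfl
        · rw [ind_true (hTlt s z (by rw [hz3]; omega)),
            ind_true ⟨hz4, hlt _ hz5 (hkF j h)⟩]; rfl
    have hocc1 : ∀ s ∈ S, ∀ z ∈ X, occ T S P Q J s (z - 1) = 1 := by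
      intro s hs z hz
      rw [hXmem] at hz
      obtain ⟨⟨hz1, hz2⟩, hz3⟩ := hz
      unfold occ
      rw [if_pos hs, sub_add_cancel, ind_false (p := z ∈ Finset.Ioc P Q ∧ _) (by rw [hz3]; tauto)]
      rcases eq_or_lt_of_le (show P ≤ z - 1 by omega) with hzP | hzP
      · rw [ind_true (by rw [← hzP]; exact hSP s hs), ind_false (by rw [Finset.mem_Ioc]; omega)]; rfl
      · have hz4 : z - 1 ∈ Finset.Ioc P Q := by rw [Finset.mem_Ioc]; omega
        have hz5 := hmem _ hz4
        have hz6 : ((z - 1 : ℤ) : ZMod e) = j - 1 := by push_cast; rw [hz3]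
        rw [hz6] at hz5 ⊢
        rcases hsep (j - 1) with h | h
        · have hk := hkE _ h
          rw [sub_add_cancel] at hk
          rw [ind_false (hTgt s (z - 1) (by rw [hz6]; omega)),
            ind_true ⟨hz4, hlt _ hz5 hk⟩]; rfl
        · have hk := hkF _ h
          rw [sub_add_cancel] at hk
          rw [ind_true (hTlt s (z - 1) (by rw [hz6]; omega)),
            ind_false (fun h' => hgt _ hk h'.2)]; rfl
    obtain ⟨lam, hlam, hlamU, hadd, hN⟩ := step he n hμ
      (U := fun s => {z | occ T S P Q J s z = 1}) hμU j S X (fun z hz => ((hXmem z).1 hz).2)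
      (fun s hs z hz => ⟨hocc1 s hs z hz, fun h => by
        have h2 := hocc0 s hs z hz
        rw [Set.mem_ofPred_eq] at h
        omega⟩) 0 H
      (fun s z hz => by
        rw [Set.mem_ofPred_eq]; unfold occ
        rw [ind_true (hneg s z hz), ind_false (by rw [Finset.mem_Ioc]; omega),
          ind_false (by rw [Finset.mem_Ioc]; omega)]
        simp)
      (fun s z hz => by
        rw [Set.mem_ofPred_eq]; unfold occ
        rw [ind_false (hpos s z hz), ind_false (by rw [Finset.mem_Ioc]; omega),
          ind_false (by rw [Finset.mem_Ioc]; omega)]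
        simp)
    refine ⟨lam, hlam, ?_, ?_⟩
    · intro s z
      rw [hlamU, Set.mem_ofPred_eq]
      by_cases hs : s ∈ S
      · have hsplit : ∀ z : ℤ, ind (z ∈ Finset.Ioc P Q ∧ (z : ZMod e) ∈ J ++ [j]) =
            ind (z ∈ Finset.Ioc P Q ∧ (z : ZMod e) ∈ J) + ind (z ∈ X) := by
          intro z
          rw [hXdef, Finset.mem_filter]
          by_cases c1 : z ∈ Finset.Ioc P Q
          · by_cases c2 : (z : ZMod e) = j
            · simp [c1, c2, hjJ, ind]
            · simp [c1, c2, ind]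
          · simp [c1, ind]
        have hocc : occ T S P Q (J ++ [j]) s z =
            occ T S P Q J s z + ind (z ∈ X) - ind (z + 1 ∈ X) := by
          unfold occ
          rw [if_pos hs, if_pos hs, hsplit, hsplit]; ring
        rw [hocc]
        simp only [hs, true_and]
        by_cases c1 : z ∈ X
        · have c2 : z + 1 ∉ X := by
            intro c2
            rw [hXmem] at c1 c2
            have := c2.2
            push_cast at this
            rw [c1.2] at this
            exact hne (by simpa using this)
          simp [c1, c2, hocc0 s hs z c1, ind]
        · by_cases c2 : z + 1 ∈ X
          · have := hocc1 s hs _ c2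
            rw [add_sub_cancel_right] at this
            simp [c1, c2, this, ind]
          · simp [c1, c2, ind]
      · simp [occ, hs]
    · have hp := Path.snoc hpath (p := (j, S.card * X.card)) hadd
      simp only [hN] at hp
      rw [List.map_append, List.map_append, List.sum_append]
      simp only [List.map_cons, List.map_nil, List.sum_cons, List.sum_nil, add_zero]
      convert hp using 2
      refine Finset.sum_congr rfl fun s hs => Finset.sum_congr rfl fun z hz =>
        Finset.sum_congr rfl fun s' _ => Finset.sum_congr rfl fun z' _ => ?_
      rw [((hXmem z).1 hz).2]
      by_cases hc : (z' : ZMod e) = j ∧ (s < s' ∨ (s = s' ∧ z' < z))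
      · rw [if_pos hc, if_pos hc]
        have hj := hc.1
        unfold sD
        have hiff : z' ∈ X ↔ z' ∈ Finset.Ioc P Q := by
          rw [hXdef, Finset.mem_filter]; simp [hj]
        by_cases hin : s' ∈ S ∧ z' ∈ Finset.Ioc P Q
        · rw [if_pos hin, if_pos (by rwa [hiff])]
        · rw [if_neg hin, if_neg (by rwa [hiff])]
          simp only [Set.mem_ofPred_eq]
          by_cases hs' : s' ∈ S
          · have hz' : z' ∉ Finset.Ioc P Q := fun h => hin ⟨hs', h⟩
            have a1 : occ T S P Q J s' z' = ind (z' ∈ T s') := by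
              unfold occ
              rw [if_pos hs', ind_false (p := z' ∈ Finset.Ioc P Q ∧ _) (fun h => hz' h.1),
                ind_false (p := z' + 1 ∈ Finset.Ioc P Q ∧ _)]
              · ring
              · rintro ⟨h1, h2⟩
                rw [Finset.mem_Ioc] at h1 hz'
                have h3 : z' = P := by omega
                have h4 := hkE j (by rw [← hj, h3, hP])
                refine hgt _ h4 ?_
                rw [← hj]; exact_mod_cast h2
            have a2 : occ T S P Q J s' (z' - 1) = ind (z' - 1 ∈ T s') := by
              unfold occ
              rw [if_pos hs', sub_add_cancel, ind_false (p := z' ∈ Finset.Ioc P Q ∧ _)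
                (fun h => hz' h.1), ind_false (p := z' - 1 ∈ Finset.Ioc P Q ∧ _)]
              · ring
              · rintro ⟨h1, h2⟩
                rw [Finset.mem_Ioc] at h1 hz'
                have h3 : z' - 1 = Q := by omega
                have h5 : ((z' - 1 : ℤ) : ZMod e) = j - 1 := by push_cast; rw [hj]
                have h4 := hkF (j - 1) (by rw [← h5, h3, hQ])
                rw [sub_add_cancel] at h4
                refine hgt _ h4 ?_
                rw [← h5]; exact h2
            rw [a1, a2, ind_congr ind_eq_one, ind_congr ind_eq_one]
          · have a1 : ∀ z, occ T S P Q J s' z = ind (z ∈ T s') := by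
              intro z; unfold occ; rw [if_neg hs', add_zero]
            rw [a1, a1, ind_congr ind_eq_one, ind_congr ind_eq_one]
      · rw [if_neg hc, if_neg hc]

/-! ### Assembly -/

lemma fiber_sum {e : ℕ} (l : List (ZMod e)) (hnd : l.Nodup) (W : Finset ℤ)
    (hmem : ∀ z ∈ W, ((z : ℤ) : ZMod e) ∈ l) (f : ℤ → ℤ) :
    (l.map (fun j => ∑ z ∈ W.filter (fun z : ℤ => (z : ZMod e) = j), f z)).sum = ∑ z ∈ W, f z := by
  rw [← List.sum_toFinset _ hnd]
  exact Finset.sum_fiberwise_of_maps_to (fun z hz => by simpa using hmem z hz) f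

lemma slot_mem {e r : ℕ} [NeZero e] (B : Fin e → ℕ) (M : Fin r → Fin e → Bool) (s : Fin r) (j : ZMod e) :
    slot B j ∈ Tset B M s ↔ M s (rk B j) = true := by
  rw [mem_Tset, slot_cast]; simp

lemma colPred_ne {e : ℕ} (i : Fin e) (hi : i.1 ≠ 0) : colPred i ≠ i := by
  intro h
  have := congrArg Fin.val h
  simp only [colPred] at this
  omega

/-- The matrix obtained by flipping the rows in `S`. -/
def flipM {e r : ℕ} (i : Fin e) (S : Finset (Fin r)) (L : Fin r → Fin e → Bool) : Fin r → Fin e → Bool :=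
  fun s c => if s ∈ S ∧ (c = colPred i ∨ c = i) then !(L s c) else L s c

lemma Nval_flip {e r : ℕ} (i : Fin e) (S : Finset (Fin r)) (L : Fin r → Fin e → Bool)
    (hS : ∀ s ∈ S, L s (colPred i) = true ∧ L s i = false) :
    Nval i L (flipM i S L) = ∑ s ∈ S, ∑ s', if s < s' ∧ s' ∉ S then
      ind (L s' (colPred i) = true) - ind (L s' i = true) else 0 := by
  unfold Nval
  have h1 : Finset.univ.filter (fun a : Fin r => ¬(L a i = flipM i S L a i)) = S := by
    ext a
    by_cases ha : a ∈ S <;> simp [flipM, ha]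
  rw [h1]
  refine Finset.sum_congr rfl fun s _ => ?_
  rw [Finset.card_filter, Finset.card_filter]
  push_cast
  rw [← Finset.sum_sub_distrib]
  refine Finset.sum_congr rfl fun s' _ => ?_
  by_cases hs' : s' ∈ S
  · simp [flipM, hs', hS s' hs']
  · by_cases hlt : s < s'
    · rcases Bool.eq_false_or_eq_true (L s' (colPred i)) with c1 | c1 <;>
        rcases Bool.eq_false_or_eq_true (L s' i) with c2 | c2 <;>
        simp [flipM, hs', hlt, c1, c2, ind]
    · simp [hlt]

lemma occ_final {e r : ℕ} [NeZero e] (B : Fin e → ℕ)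
    (L : Fin r → Fin e → Bool) (i : Fin e) (p q : ZMod e)
    (hp : rk B p = colPred i) (hq : rk B q = i) (hlt : slot B p < slot B q) (S : Finset (Fin r))
    (hS : ∀ s ∈ S, L s (colPred i) = true ∧ L s i = false) (l : List (ZMod e))
    (hmem : ∀ z ∈ Finset.Ioc (slot B p) (slot B q), ((z : ℤ) : ZMod e) ∈ l) (s : Fin r) (z : ℤ) :
    occ (Tset B L) S (slot B p) (slot B q) l s z = 1 ↔ z ∈ Tset B (flipM i S L) s := by
  by_cases hs : s ∈ S
  · have h1 : ∀ z : ℤ, (z ∈ Finset.Ioc (slot B p) (slot B q) ∧ (z : ZMod e) ∈ l) ↔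
        z ∈ Finset.Ioc (slot B p) (slot B q) := fun z => ⟨fun h => h.1, fun h => ⟨h, hmem z h⟩⟩
    unfold occ
    rw [if_pos hs, ind_congr (h1 z), ind_congr (h1 (z + 1))]
    simp only [Finset.mem_Ioc]
    by_cases c1 : z = slot B q
    · rw [c1, slot_mem, slot_mem, hq, ind_true (p := _ ∧ slot B q ≤ slot B q) (by omega),
        ind_false (p := _ ∧ slot B q + 1 ≤ slot B q) (by omega)]
      simp [flipM, hs, hS s hs, ind]
    · by_cases c2 : z = slot B p
      · rw [c2, slot_mem, slot_mem, hp, ind_false (p := slot B p < slot B p ∧ _) (by omega),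
          ind_true (p := slot B p < slot B p + 1 ∧ _) (by omega)]
        simp [flipM, hs, hS s hs, ind]
      · have h2 : (slot B p < z ∧ z ≤ slot B q) ↔ (slot B p < z + 1 ∧ z + 1 ≤ slot B q) := by omega
        rw [ind_congr h2, sub_self, add_zero, ind_eq_one, mem_Tset, mem_Tset]
        apply or_congr_right
        apply and_congr_right
        intro h3
        have h4 : rk B (z : ZMod e) ≠ colPred i := by
          rw [← hp]; intro h
          rw [rk_inj B h] at h3; exact c2 h3
        have h5 : rk B (z : ZMod e) ≠ i := by
          intro h
          rw [← hq] at h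
          rw [rk_inj B h] at h3; exact c1 h3
        simp [flipM, h4, h5]
  · unfold occ
    rw [if_neg hs, add_zero, ind_eq_one, mem_Tset, mem_Tset]
    simp [flipM, hs]

theorem main_aux (e r : ℕ) (he : 2 ≤ e)
    (B : Fin e → ℕ) (L : Fin r → Fin e → Bool) (i : Fin e) (hi : i.1 ≠ 0) (k : ℕ) (hk : 0 < k) :
    ∃ ops : List (ZMod e × ℕ), (∀ q ∈ ops, 0 < q.2) ∧
      FopList (PtCharge B L) ops (Finsupp.single (PtPart B L) 1) =
        ∑ M ∈ Finset.univ.filter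
            (fun M : Fin r → Fin e → Bool => GArrow i k L M),
          Finsupp.single (PtPart B M) (LaurentPolynomial.T (Nval i L M)) := by
  haveI : NeZero e := ⟨by omega⟩
  obtain ⟨p, hp⟩ := (rk_bij B).2 (colPred i)
  obtain ⟨q, hq⟩ := (rk_bij B).2 i
  have hci : colPred i < i := by
    rw [Fin.lt_def]; simp only [colPred]; omega
  have hPQ : slot B p < slot B q := by rw [← rk_lt_iff, hp, hq]; exact hci
  have hsep : ∀ j, slot B j ≤ slot B p ∨ slot B q ≤ slot B j := by
    intro j
    rw [← rk_le_iff, ← rk_le_iff, hp, hq, Fin.le_def, Fin.le_def]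
    simp only [colPred]
    omega
  obtain ⟨H, hH⟩ := slot_bound B
  obtain ⟨key, hkE, hkF⟩ := exists_key (fun j => slot B j ≤ slot B p) ⟨p, le_refl _⟩
    ⟨q, not_le.2 hPQ⟩
  obtain ⟨l, hnd, hlm, hsort⟩ := exists_sorted key
    ((Finset.Ioc (slot B p) (slot B q)).image (fun z : ℤ => (z : ZMod e)))
  have hmem : ∀ z ∈ Finset.Ioc (slot B p) (slot B q), ((z : ℤ) : ZMod e) ∈ l := fun z hz =>
    (hlm _).2 (Finset.mem_image_of_mem _ hz)
  set a : Fin r → ZMod e := fun s => (((nsum B L s : ℤ)) : ZMod e) with ha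
  have hch : PtCharge B L = a := by
    funext s; simp [PtCharge, ha]
  have hσ : MPart (PtPart B L) := fun s => (PtPart_spec B L s).1
  set ops : List (ZMod e × ℕ) := l.map (fun j => (j, k * ((Finset.Ioc (slot B p) (slot B q)).filter
    (fun z : ℤ => (z : ZMod e) = j)).card)) with hops
  have hopsnd : (ops.map Prod.fst).Nodup := by
    rw [hops, List.map_map]
    simpa [Function.comp_def] using hnd
  -- the coefficient at a target
  have hcoef : ∀ S : Finset (Fin r), S.card = k →
      (∀ s ∈ S, L s (colPred i) = true ∧ L s i = false) →
      (∀ s z, z ∈ Set.range (bet (nsum B L s) (PtPart B (flipM i S L) s)) ↔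
        z ∈ Tset B (flipM i S L) s) ∧
      FopList a ops (Finsupp.single (PtPart B L) 1) (PtPart B (flipM i S L)) =
        LaurentPolynomial.T (Nval i L (flipM i S L)) := by
    intro S hSk hS
    have hTlt : ∀ s (z : ℤ), z < slot B (z : ZMod e) → z ∈ Tset B L s := fun s z h =>
      (mem_Tset B L s z).2 (Or.inl h)
    have hTgt : ∀ s (z : ℤ), slot B (z : ZMod e) < z → z ∉ Tset B L s := fun s z h h' => by
      rw [mem_Tset] at h'; omega
    have hSP : ∀ s ∈ S, slot B p ∈ Tset B L s := fun s hs => by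
      rw [slot_mem, hp]; exact (hS s hs).1
    have hSQ : ∀ s ∈ S, slot B q ∉ Tset B L s := fun s hs => by
      rw [slot_mem, hq]; simp [(hS s hs).2]
    have hcP : slot B ((slot B p : ℤ) : ZMod e) = slot B p := by rw [slot_cast]
    have hcQ : slot B ((slot B q : ℤ) : ZMod e) = slot B q := by rw [slot_cast]
    obtain ⟨lam, hl, hlU, hpath⟩ := chain he (slot B) (Tset B L) hTlt hTgt S (slot B p) (slot B q)
      hPQ hcP hcQ hsep hSP hSQ H (slot_nonneg B) hH key hkE
      (fun j hj => hkF j (by omega)) l hnd hsort hmem (fun s => (nsum B L s : ℤ)) hσ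
      (fun s => (PtPart_spec B L s).2) l [] (by simp)
    have hlU' : ∀ s z, z ∈ Set.range (bet (nsum B L s) (lam s)) ↔ z ∈ Tset B (flipM i S L) s := by
      intro s z
      rw [hlU, occ_final B L i p q hp hq hPQ S hS l hmem]
    have hlam : lam = PtPart B (flipM i S L) := by
      funext s
      exact PtPart_eq B _ s (hl s) (hlU' s)
    subst hlam
    refine ⟨hlU', ?_⟩
    rw [hSk] at hpath
    rw [coeff_path he a hσ hpath hopsnd]
    congr 1
    have hsw : ∀ (G : Fin r → ℤ → ℤ),
        (l.map (fun j => ∑ s ∈ S, ∑ z ∈ (Finset.Ioc (slot B p) (slot B q)).filter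
          (fun z : ℤ => (z : ZMod e) = j), G s z)).sum =
        ∑ s ∈ S, ∑ z ∈ Finset.Ioc (slot B p) (slot B q), G s z := by
      intro G
      rw [Finset.sum_comm, ← fiber_sum l hnd _ hmem]
      congr 2
      funext j
      rw [Finset.sum_comm]
    rw [hsw, static_total he (slot B) (Tset B L) hTlt hTgt S _ _ hPQ hcP hcQ hSP hSQ H
      (slot_nonneg B) hH, Nval_flip i S L hS]
    simp only [slot_mem, hp, hq]
  have hGA : ∀ M, GArrow i k L M → (∀ s z, z ∈ Set.range (bet (nsum B L s) (PtPart B M s)) ↔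
        z ∈ Tset B M s) ∧
      FopList a ops (Finsupp.single (PtPart B L) 1) (PtPart B M) =
        LaurentPolynomial.T (Nval i L M) := by
    rintro M ⟨S, hSk, hS, rfl⟩
    exact hcoef S hSk hS
  refine ⟨ops, ?_, ?_⟩
  · intro o ho
    rw [hops, List.mem_map] at ho
    obtain ⟨j, hj, rfl⟩ := ho
    rw [hlm, Finset.mem_image] at hj
    obtain ⟨z, hz, rfl⟩ := hj
    exact Nat.mul_pos hk (Finset.card_pos.2 ⟨z, by simp only [Finset.mem_filter, hz, and_self]⟩)
  · rw [hch]
    ext1 lam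
    rw [Finsupp.finsetSum_apply]
    by_cases hM : ∃ M, GArrow i k L M ∧ lam = PtPart B M
    · obtain ⟨M, hGM, rfl⟩ := hM
      rw [(hGA M hGM).2, Finset.sum_eq_single M]
      · rw [Finsupp.single_eq_same]
      · intro M' hM' hne
        rw [Finset.mem_filter] at hM'
        rw [Finsupp.single_eq_of_ne]
        intro h
        first
          | exact hne (PtPart_inj B (n := fun s => (nsum B L s : ℤ)) (hGA M' hM'.2).1 (hGA M hGM).1 h)
          | exact hne (PtPart_inj B (n := fun s => (nsum B L s : ℤ)) (hGA M' hM'.2).1 (hGA M hGM).1 h.symm)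
      · intro h
        exact absurd (Finset.mem_filter.2 ⟨Finset.mem_univ _, hGM⟩) h
    · rw [Finset.sum_eq_zero]
      · by_contra hne
        obtain ⟨d, hd⟩ := support_path he a hσ ops lam (Finsupp.mem_support_iff.2 hne)
        apply hM
        refine support_matrix B L i hi k p q hp hq lam (hd.mpart hσ) hd.le ?_
        intro g h hg N hN
        rw [path_sum he (fun s => (nsum B L s : ℤ)) hd g h hg N hN, hops, List.map_map]
        have h1 : ∀ j : ZMod e, ((k * ((Finset.Ioc (slot B p) (slot B q)).filter
            (fun z : ℤ => (z : ZMod e) = j)).card : ℕ) : ℤ) * h j =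
            ∑ z ∈ (Finset.Ioc (slot B p) (slot B q)).filter (fun z : ℤ => (z : ZMod e) = j),
              (k : ℤ) * (g z - g (z - 1)) := by
          intro j
          rw [Finset.sum_congr rfl (g := fun _ => (k : ℤ) * h j)]
          · rw [Finset.sum_const]; simp only [nsmul_eq_mul]; push_cast; ring
          · intro z hz
            rw [hg, (Finset.mem_filter.1 hz).2]
        simp only [Function.comp_def, h1]
        rw [fiber_sum l hnd _ hmem, ← Finset.mul_sum]
        have := tele g _ _ hPQ.le
        rw [← neg_sub (g (slot B p)), ← this, ← Finset.sum_neg_distrib]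
        congr 1
        refine Finset.sum_congr rfl fun z _ => ?_
        ring
      · intro M' hM'
        rw [Finset.mem_filter] at hM'
        rw [Finsupp.single_eq_of_ne]
        intro h
        first
          | exact hM ⟨M', hM'.2, h⟩
          | exact hM ⟨M', hM'.2, h.symm⟩

/-- A matrix induction step `G^{(k)}_i` can be realised by a
sequence of divided powers of Chevalley generators on multipartitions. -/
theorem matrix_induction_realised (e r : ℕ) (he : 2 ≤ e) (hr : 1 ≤ r)
    (B : Fin e → ℕ) (hB : ∃ i, B i = 0)
    (L : Fin r → Fin e → Bool) (i : Fin e) (hi : i.1 ≠ 0) (k : ℕ) (hk : 0 < k) :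
    ∃ ops : List (ZMod e × ℕ), (∀ q ∈ ops, 0 < q.2) ∧
      FopList (PtCharge B L) ops (Finsupp.single (PtPart B L) 1) =
        ∑ M ∈ Finset.univ.filter
            (fun M : Fin r → Fin e → Bool => GArrow i k L M),
          Finsupp.single (PtPart B M) (LaurentPolynomial.T (Nval i L M)) := by
  exact main_aux e r he B L i hi k hk


end
end AK
end
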